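/- If A is a ribbon that is not equitable, then there exists an equitable ribbon R of the same size such that s_R − s_A is Schur-positive and supp(A) is strictly contained in supp(R). -/

import Mathlib

/-- A skew shape `outer / inner`: the boxes of the Young diagram of `outer`
that are not boxes of the Young diagram of `inner`. -/
structure SkewShape where
  outer : YoungDiagram
  inner : YoungDiagram
  inner_le : inner ≤ outer

namespace SkewShape

/-- The set of boxes of a skew shape. -/
def cells (A : SkewShape) : Finset (ℕ × ℕ) := A.outer.cells \ A.inner.cells

/-- The size of a skew shape is its number of boxes. -/
def size (A : SkewShape) : ℕ := A.cells.card

/-- The length of row `i` of a skew shape. -/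
def rowLen (A : SkewShape) (i : ℕ) : ℕ := (A.cells.filter fun c => c.1 = i).card

/-- The length of column `j` of a skew shape. -/
def colLen (A : SkewShape) (j : ℕ) : ℕ := (A.cells.filter fun c => c.2 = j).card

/-- The set of indices of nonempty rows. -/
def rowSet (A : SkewShape) : Finset ℕ := A.cells.image Prod.fst

/-- The set of indices of nonempty columns. -/
def colSet (A : SkewShape) : Finset ℕ := A.cells.image Prod.snd

/-- The number of nonempty rows. -/
def numRows (A : SkewShape) : ℕ := A.rowSet.card

/-- The number of nonempty columns. -/
def numCols (A : SkewShape) : ℕ := A.colSet.card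

/-- `rows A`: the multiset of lengths of the nonempty rows of `A`
(equivalently, that sequence sorted into weakly decreasing order). -/
def rows (A : SkewShape) : Multiset ℕ := A.rowSet.val.map A.rowLen

/-- `cols A`: the multiset of lengths of the nonempty columns of `A`. -/
def cols (A : SkewShape) : Multiset ℕ := A.colSet.val.map A.colLen

/-- A skew shape is disconnected if its boxes can be split into two nonempty
parts such that no box of one part shares a row or a column with a box of the
other part. -/
def Disconnected (A : SkewShape) : Prop :=
  ∃ B C : Finset (ℕ × ℕ), B.Nonempty ∧ C.Nonempty ∧ B ∪ C = A.cells ∧ B ∩ C = ∅ ∧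
    ∀ b ∈ B, ∀ c ∈ C, b.1 ≠ c.1 ∧ b.2 ≠ c.2

/-- A skew shape is connected if it is nonempty and not disconnected. -/
def Connected (A : SkewShape) : Prop := A.cells.Nonempty ∧ ¬ A.Disconnected

/-- A ribbon is a connected skew shape containing no 2×2 block of boxes. -/
def Ribbon (A : SkewShape) : Prop :=
  A.Connected ∧ ∀ i j : ℕ, ¬ ((i, j) ∈ A.cells ∧ (i, j + 1) ∈ A.cells ∧
    (i + 1, j) ∈ A.cells ∧ (i + 1, j + 1) ∈ A.cells)

/-- The lengths of any two nonempty rows differ by at most one. -/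
def RowEquitable (A : SkewShape) : Prop :=
  ∀ i ∈ A.rowSet, ∀ i' ∈ A.rowSet, A.rowLen i ≤ A.rowLen i' + 1

/-- The lengths of any two nonempty columns differ by at most one. -/
def ColEquitable (A : SkewShape) : Prop :=
  ∀ j ∈ A.colSet, ∀ j' ∈ A.colSet, A.colLen j ≤ A.colLen j' + 1

/-- Equitable: both row equitable and column equitable. -/
def Equitable (A : SkewShape) : Prop := A.RowEquitable ∧ A.ColEquitable

/-- A filling of a skew shape is semistandard if its entries are positive
integers, weakly increasing along rows and strictly increasing down columns. -/
def IsSsyt (A : SkewShape) (T : ℕ × ℕ → ℕ) : Prop :=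
  (∀ c ∈ A.cells, 1 ≤ T c) ∧
  (∀ i j j', (i, j) ∈ A.cells → (i, j') ∈ A.cells → j ≤ j' → T (i, j) ≤ T (i, j')) ∧
  (∀ i i' j, (i, j) ∈ A.cells → (i', j) ∈ A.cells → i < i' → T (i, j) < T (i', j))

end SkewShape

/-- `c` comes weakly before `d` in the reverse reading order (right to left
along rows, rows top to bottom). -/
def ReadsBefore (c d : ℕ × ℕ) : Prop := c.1 < d.1 ∨ (c.1 = d.1 ∧ d.2 ≤ c.2)

instance : DecidableRel ReadsBefore := fun c d => by unfold ReadsBefore; infer_instance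

namespace SkewShape

/-- The number of boxes of `A` filled with the entry `k` by the filling `T`. -/
def content (A : SkewShape) (T : ℕ × ℕ → ℕ) (k : ℕ) : ℕ :=
  (A.cells.filter fun c => T c = k).card

/-- A Littlewood--Richardson filling: a semistandard filling such that every
prefix of the reverse reading word contains at least as many `k`'s as
`(k+1)`'s, for every positive `k`. -/
def IsLR (A : SkewShape) (T : ℕ × ℕ → ℕ) : Prop :=
  A.IsSsyt T ∧ ∀ d ∈ A.cells, ∀ k : ℕ,
    (A.cells.filter fun c => T c = k + 2 ∧ ReadsBefore c d).card ≤
    (A.cells.filter fun c => T c = k + 1 ∧ ReadsBefore c d).card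

end SkewShape

/-- The `i`-th largest part (0-indexed) of a multiset of natural numbers,
i.e. the `i`-th entry of the multiset sorted into weakly decreasing order. -/
def part (lam : Multiset ℕ) (i : ℕ) : ℕ := (lam.sort (· ≥ ·)).getD i 0

namespace SkewShape

/-- The support of a skew shape `A`: the set of partitions `lam` (multisets of
positive integers) for which there exists an LR filling of `A` of content `lam`. -/
def supp (A : SkewShape) : Set (Multiset ℕ) :=
  {lam | 0 ∉ lam ∧ ∃ T : ℕ × ℕ → ℕ, A.IsLR T ∧ ∀ i : ℕ, A.content T (i + 1) = part lam i}

/-- The set of LR fillings of `A` of content `lam` (normalized to vanish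
outside the boxes of `A`). -/
def LRset (A : SkewShape) (lam : Multiset ℕ) : Set ((ℕ × ℕ) → ℕ) :=
  {T | A.IsLR T ∧ (∀ c, c ∉ A.cells → T c = 0) ∧ ∀ i : ℕ, A.content T (i + 1) = part lam i}

/-- `s_A − s_B` is Schur-positive: for every partition, the number of LR
fillings of `B` of that content is at most the number for `A`. -/
def SchurPosDiff (A B : SkewShape) : Prop :=
  ∀ lam : Multiset ℕ, (B.LRset lam).ncard ≤ (A.LRset lam).ncard

end SkewShape

/-- The sum of the `k` largest parts of a multiset of natural numbers. -/
def psum (lam : Multiset ℕ) (k : ℕ) : ℕ := ((lam.sort (· ≥ ·)).take k).sum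

/-- Dominance order: `DomLe lam mu` means `lam ⊴ mu`, i.e. for every `k` the
sum of the `k` largest parts of `lam` is at most that of `mu`. -/
def DomLe (lam mu : Multiset ℕ) : Prop := ∀ k : ℕ, psum lam k ≤ psum mu k

/-- The conjugate (transpose) of a partition given as a multiset: its parts
are the numbers `#{x ∈ lam | x ≥ j}` for `j = 1, 2, …`. -/
def conj (lam : Multiset ℕ) : Multiset ℕ :=
  ((Finset.range lam.sum).val.map fun j => Multiset.card (lam.filter fun x => j + 1 ≤ x)).filter
    fun y => y ≠ 0

namespace Rib
open Finset

def sm (M j : ℕ) (q : ℕ → ℕ) : ℤ := ∑ i ∈ Ico j M, (q i : ℤ)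

lemma sm_succ {M j : ℕ} (h : j < M) (q : ℕ → ℕ) : sm M j q = q j + sm M (j+1) q := by
  unfold sm; rw [Finset.sum_eq_sum_Ico_succ_bot h]

lemma sm_congr {M j : ℕ} {q q' : ℕ → ℕ} (h : ∀ i, j ≤ i → q i = q' i) : sm M j q = sm M j q' := by
  unfold sm; apply Finset.sum_congr rfl; intro i hi; rw [h i (by simp at hi; omega)]

lemma sm_nonneg (M j : ℕ) (q : ℕ → ℕ) : 0 ≤ sm M j q := by unfold sm; positivity

lemma sm_mono {M j : ℕ} {q q' : ℕ → ℕ} (h : ∀ i, q i ≤ q' i) : sm M j q ≤ sm M j q' := by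
  unfold sm; apply Finset.sum_le_sum; intro i _; exact_mod_cast h i

/-- sl2-type block on rows `j ≤ i < M`. -/
structure IsBlk (f : ℕ → ℕ) (M j : ℕ) (G : (ℕ → ℕ) → Prop) (v : (ℕ → ℕ) → ℤ)
    (op : (ℕ → ℕ) → (ℕ → ℕ)) : Prop where
  le : ∀ q, G q → ∀ i, q i ≤ f i
  v0 : ∀ q, G q → v q ≤ 0
  ve : ∀ q, G q → v q ≤ 2 * sm M j q - sm M j f
  vt : ∀ q, G q → sm M j q - sm M j f ≤ v q
  step : ∀ q, G q → v q < 2 * sm M j q - sm M j f → G (op q) ∧ v (op q) = v q - 1 ∧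
    (∀ i, op q i ≤ q i) ∧ sm M j (op q) = sm M j q - 1 ∧ (∀ i < j, op q i = q i)
  inj : ∀ q q', G q → G q' → v q < 2 * sm M j q - sm M j f → v q' < 2 * sm M j q' - sm M j f →
    op q = op q' → q = q'
  top : ∀ q, G q → v q + 2 ≤ 2 * sm M j q - sm M j f → ∀ h, (∃ i, j ≤ i ∧ i < h ∧ 0 < q i) →
    ∃ i, j ≤ i ∧ i < h ∧ 0 < op q i
  locv : ∀ q q', (∀ i, j ≤ i → q i = q' i) → v q = v q'
  locG : ∀ q q', (∀ i, j ≤ i → q i = q' i) → G q → (∀ i, q' i ≤ f i) → G q'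

lemma blk_base (f : ℕ → ℕ) (M : ℕ) :
    IsBlk f M M (fun q => ∀ i, q i ≤ f i) (fun _ => 0) id := by
  constructor <;> simp [sm]

lemma blk_step {f : ℕ → ℕ} {M j : ℕ} (hj : j < M) {G v op} (B : IsBlk f M (j+1) G v op) :
    ∃ v' op', IsBlk f M j G v' op' := by
  classical
  refine ⟨fun q => min (v q) (2 * sm M (j+1) q - sm M (j+1) f - (f j - q j)),
    fun q => if v q < 2 * sm M (j+1) q - sm M (j+1) f - (f j - q j) then op q
      else Function.update q j (q j - 1), ?_⟩
  have hup : ∀ (q : ℕ → ℕ) (x : ℕ), ∀ i, j + 1 ≤ i → Function.update q j x i = q i := by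
    intro q x i hi; rw [Function.update_of_ne]; omega
  have key : ∀ q, G q → min (v q) (2 * sm M (j+1) q - sm M (j+1) f - (f j - q j)) <
      2 * sm M j q - sm M j f → ¬ v q < 2 * sm M (j+1) q - sm M (j+1) f - (f j - q j) → 1 ≤ q j := by
    intro q hq h1 h2
    rw [sm_succ hj, sm_succ hj] at h1
    omega
  have key1 : ∀ q, G q → v q < 2 * sm M (j+1) q - sm M (j+1) f - (f j - q j) →
      v q < 2 * sm M (j+1) q - sm M (j+1) f := by
    intro q hq h1
    have := B.le q hq j
    omega
  have stp : ∀ q, G q → min (v q) (2 * sm M (j+1) q - sm M (j+1) f - (f j - q j)) <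
      2 * sm M j q - sm M j f → ¬ v q < 2 * sm M (j+1) q - sm M (j+1) f - (f j - q j) →
      G (Function.update q j (q j - 1)) ∧ v (Function.update q j (q j - 1)) = v q ∧
      sm M (j+1) (Function.update q j (q j - 1)) = sm M (j+1) q := by
    intro q hq h1 h2
    refine ⟨B.locG q _ (fun i hi => (hup q _ i hi).symm) hq ?_, B.locv _ _ (hup q _), sm_congr (hup q _)⟩
    intro i
    by_cases hi : i = j
    · subst hi; simp; have := B.le q hq i; omega
    · rw [Function.update_of_ne hi]; exact B.le q hq i
  constructor
  · exact B.le
  · intro q hq; have := B.v0 q hq; simp [this]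
  · intro q hq; have := B.ve q hq; have := B.le q hq j; simp only [sm_succ hj]; omega
  · intro q hq; have := B.vt q hq; have := B.le q hq j; simp only [sm_succ hj]
    have := sm_nonneg M (j+1) q
    omega
  · intro q hq h
    by_cases h2 : v q < 2 * sm M (j+1) q - sm M (j+1) f - (f j - q j)
    · obtain ⟨a, b, c, d, e⟩ := B.step q hq (key1 q hq h2)
      simp only [if_pos h2]
      refine ⟨a, ?_, c, ?_, fun i hi => e i (by omega)⟩
      · have := e j (by omega)
        rw [b, d, this]; omega
      · rw [sm_succ hj, sm_succ hj, d, e j (by omega)]; ring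
    · have k1 := key q hq h h2
      obtain ⟨a, b, c⟩ := stp q hq h h2
      simp only [if_neg h2]
      refine ⟨a, ?_, ?_, ?_, ?_⟩
      · rw [b, c]; simp; omega
      · intro i
        by_cases hi : i = j
        · subst hi; simp
        · rw [Function.update_of_ne hi]
      · rw [sm_succ hj, sm_succ hj, c]; simp; omega
      · intro i hi; rw [Function.update_of_ne]; omega
  · intro q q' hq hq' h h' he
    by_cases h2 : v q < 2 * sm M (j+1) q - sm M (j+1) f - (f j - q j) <;>
    by_cases h2' : v q' < 2 * sm M (j+1) q' - sm M (j+1) f - (f j - q' j)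
    · rw [if_pos h2, if_pos h2'] at he
      exact B.inj q q' hq hq' (key1 q hq h2) (key1 q' hq' h2') he
    · exfalso
      rw [if_pos h2, if_neg h2'] at he
      obtain ⟨a, b, c, d, e⟩ := B.step q hq (key1 q hq h2)
      obtain ⟨a', b', c'⟩ := stp q' hq' h' h2'
      have k1 := key q' hq' h' h2'
      have e2 := e j (by omega)
      rw [he] at b d e2
      simp at e2
      omega
    · exfalso
      rw [if_neg h2, if_pos h2'] at he
      obtain ⟨a, b, c, d, e⟩ := B.step q' hq' (key1 q' hq' h2')
      obtain ⟨a', b', c'⟩ := stp q hq h h2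
      have k1 := key q hq h h2
      have e2 := e j (by omega)
      rw [← he] at b d e2
      simp at e2
      omega
    · rw [if_neg h2, if_neg h2'] at he
      have k1 := key q hq h h2
      have k2 := key q' hq' h' h2'
      funext i
      have := congrFun he i
      by_cases hi : i = j
      · subst hi; simp at this; omega
      · rwa [Function.update_of_ne hi, Function.update_of_ne hi] at this
  · intro q hq h hh ⟨i, h1, h2, h3⟩
    simp only [sm_succ hj] at h
    by_cases h2' : v q < 2 * sm M (j+1) q - sm M (j+1) f - (f j - q j)
    · simp only [if_pos h2']
      obtain ⟨a, b, c, d, e⟩ := B.step q hq (key1 q hq h2')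
      by_cases hq0 : q j = 0
      · have hij : i ≠ j := by rintro rfl; omega
        obtain ⟨i', x, y, z⟩ := B.top q hq (by omega) hh ⟨i, by omega, h2, h3⟩
        exact ⟨i', by omega, y, z⟩
      · exact ⟨j, le_rfl, by omega, by rw [e j (by omega)]; omega⟩
    · simp only [if_neg h2']
      exact ⟨j, le_rfl, by omega, by simp; omega⟩
  · intro q q' hqq
    rw [B.locv q q' (fun i hi => hqq i (by omega)), sm_congr (M := M) (j := j+1) (fun i hi => hqq i (by omega)), hqq j le_rfl]
  · intro q q' hqq hq hq'
    exact B.locG q q' (fun i hi => hqq i (by omega)) hq hq'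

lemma blk_down {f : ℕ → ℕ} {M j : ℕ} (hj : j ≤ M) {G v op} (B : IsBlk f M j G v op) :
    ∀ k ≤ j, ∃ v' op', IsBlk f M k G v' op' := by
  intro k hk
  induction hk using Nat.decreasingInduction with
  | self => exact ⟨v, op, B⟩
  | of_succ k hk ih => obtain ⟨v', op', B'⟩ := ih; exact blk_step (by omega) B'

lemma blk_mid {f : ℕ → ℕ} {M j : ℕ} {v op} (B : IsBlk f M j (fun q => ∀ i, q i ≤ f i) v op) :
    ∃ v' op', IsBlk f M j (fun q => (∀ i, q i ≤ f i) ∧ 0 < sm M j q ∧ sm M j q < sm M j f) v' op' := by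
  classical
  refine ⟨fun q => if v q = sm M j q - sm M j f then v q + 1 else v q, op, ?_⟩
  constructor
  · intro q hq; exact hq.1
  · intro q hq; have := B.v0 q hq.1; split_ifs <;> omega
  · intro q hq; have := B.ve q hq.1; split_ifs <;> omega
  · intro q hq; have := B.vt q hq.1; split_ifs <;> omega
  · intro q hq h
    have := B.vt q hq.1
    have h1 : v q < 2 * sm M j q - sm M j f ∧ 1 < sm M j q := by
      split_ifs at h <;> omega
    obtain ⟨a, b, c, d, e⟩ := B.step q hq.1 h1.1
    refine ⟨⟨a, by omega, by omega⟩, ?_, c, d, e⟩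
    rw [b, d]
    split_ifs <;> omega
  · intro q q' hq hq' h h' he
    apply B.inj q q' hq.1 hq'.1 _ _ he
    · split_ifs at h <;> omega
    · split_ifs at h' <;> omega
  · intro q hq h
    apply B.top q hq.1
    split_ifs at h <;> omega
  · intro q q' h; rw [B.locv q q' h, sm_congr h]
  · intro q q' h hq hq'
    exact ⟨hq', by rw [← sm_congr h]; exact hq.2⟩

/-- low region condition -/
def Low (f : ℕ → ℕ) (M : ℕ) (forced : Prop) (j : ℕ) (q : ℕ → ℕ) : Prop :=
  forced ∨ (0 < sm M j q ∧ sm M j q < sm M j f)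

lemma core (f : ℕ → ℕ) (M : ℕ) (forced : Prop) (j : ℕ) (hj : j ≤ M) :
    ∃ op : (ℕ → ℕ) → (ℕ → ℕ),
      (∀ q, (∀ i, q i ≤ f i) → Low f M forced j q → sm M 0 f + 2 ≤ 2 * sm M 0 q →
        Low f M forced j (op q) ∧ (∀ i, op q i ≤ q i) ∧ sm M 0 (op q) = sm M 0 q - 1 ∧
        ∀ h, (∃ i < h, 0 < q i) → ∃ i < h, 0 < op q i) ∧
      (∀ q q', (∀ i, q i ≤ f i) → Low f M forced j q → sm M 0 f + 2 ≤ 2 * sm M 0 q →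
        (∀ i, q' i ≤ f i) → Low f M forced j q' → sm M 0 f + 2 ≤ 2 * sm M 0 q' →
        op q = op q' → q = q') := by
  by_cases hF : forced
  · obtain ⟨v, op, B⟩ := blk_down le_rfl (blk_base f M) 0 (by omega)
    refine ⟨op, ?_, ?_⟩
    · intro q hq hl hs
      have := B.v0 q hq
      obtain ⟨a, b, c, d, e⟩ := B.step q hq (by omega)
      refine ⟨Or.inl hF, c, d, ?_⟩
      intro h ⟨i, hi, hi'⟩
      obtain ⟨i', _, y⟩ := B.top q hq (by omega) h ⟨i, by omega, hi, hi'⟩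
      exact ⟨i', y⟩
    · intro q q' hq hl hs hq' hl' hs' he
      have := B.v0 q hq
      have := B.v0 q' hq'
      exact B.inj q q' hq hq' (by omega) (by omega) he
  · obtain ⟨v, op, B⟩ := blk_down le_rfl (blk_base f M) j (by omega)
    obtain ⟨v, op, B⟩ := blk_mid B
    obtain ⟨v, op, B⟩ := blk_down hj B 0 (by omega)
    refine ⟨op, ?_, ?_⟩
    · intro q hq hl hs
      have hG := And.intro hq (hl.resolve_left hF)
      have := B.v0 q hG
      obtain ⟨a, b, c, d, e⟩ := B.step q hG (by omega)
      refine ⟨Or.inr a.2, c, d, ?_⟩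
      intro h ⟨i, hi, hi'⟩
      obtain ⟨i', _, y⟩ := B.top q hG (by omega) h ⟨i, by omega, hi, hi'⟩
      exact ⟨i', y⟩
    · intro q q' hq hl hs hq' hl' hs' he
      have hG := And.intro hq (hl.resolve_left hF)
      have hG' := And.intro hq' (hl'.resolve_left hF)
      have := B.v0 q hG
      have := B.v0 q' hG'
      exact B.inj q q' hG hG' (by omega) (by omega) he

end Rib

namespace Rib

lemma halve {Γ K : Type*} (Γs : Set Γ) (st : Γ → Γ) (hst : ∀ C ∈ Γs, st C ∈ Γs)
    (hst2 : ∀ C ∈ Γs, st (st C) = C) (a b : Γ → ℕ) (hab : ∀ C ∈ Γs, a (st C) = b C)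
    (hba : ∀ C ∈ Γs, b (st C) = a C) (A D : ℕ → K → Prop) (S S' : Set K)
    (hA : ∀ m n κ, m ≤ n → A n κ → A m κ) (hD : ∀ m n κ, m ≤ n → D n κ → D m κ)
    (alive : ∀ n, ∀ κ ∈ S, D n κ ∨ A n κ → ∀ κ' ∈ S', D n κ' ∨ A n κ')
    (op : ℕ → K → K)
    (hop : ∀ m, ∀ κ ∈ S, A m κ → D m κ → op m κ ∈ S' ∧ A m (op m κ) ∧ D m (op m κ))
    (hinj : ∀ m, ∀ κ ∈ S, ∀ κ' ∈ S, A m κ → D m κ → A m κ' → D m κ' → op m κ = op m κ' → κ = κ') :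
    ∃ F : Γ × K → Γ × K,
      (∀ C ∈ Γs, ∀ κ ∈ S, A (a C) κ → D (b C) κ →
        (F (C, κ)).1 ∈ Γs ∧ (F (C, κ)).2 ∈ S' ∧ A (a (F (C, κ)).1) (F (C, κ)).2 ∧
          D (b (F (C, κ)).1) (F (C, κ)).2) ∧
      (∀ C ∈ Γs, ∀ κ ∈ S, A (a C) κ → D (b C) κ → ∀ C' ∈ Γs, ∀ κ' ∈ S, A (a C') κ' → D (b C') κ' →
        F (C, κ) = F (C', κ') → C = C' ∧ κ = κ') := by
  classical
  let F : Γ × K → Γ × K := fun x =>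
    if a x.1 ≤ b x.1 then
      (if D (b x.1) (op (a x.1) x.2) then (x.1, op (a x.1) x.2) else (st x.1, op (a x.1) x.2))
    else if D (a x.1) x.2 then (x.1, op (a x.1) x.2)
    else if D (a x.1) (op (b x.1) x.2) then (st x.1, op (b x.1) x.2) else (x.1, op (b x.1) x.2)
  -- description of the outcomes
  have desc : ∀ C ∈ Γs, ∀ κ ∈ S, A (a C) κ → D (b C) κ →
      (F (C, κ)).1 ∈ Γs ∧ (F (C, κ)).2 ∈ S' ∧ A (a (F (C, κ)).1) (F (C, κ)).2 ∧
          D (b (F (C, κ)).1) (F (C, κ)).2 ∧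
      ((a (F (C,κ)).1 ≤ b (F (C,κ)).1 ∧ A (a (F (C,κ)).1) κ ∧ D (a (F (C,κ)).1) κ ∧
          (F (C,κ)).2 = op (a (F (C,κ)).1) κ ∧
          ((C = (F (C,κ)).1 ∧ D (b (F (C,κ)).1) κ) ∨ (C = st (F (C,κ)).1 ∧ ¬ D (b (F (C,κ)).1) κ)))
       ∨ (b (F (C,κ)).1 < a (F (C,κ)).1 ∧ D (a (F (C,κ)).1) (F (C,κ)).2 ∧
          A (a (F (C,κ)).1) κ ∧ D (a (F (C,κ)).1) κ ∧
          (F (C,κ)).2 = op (a (F (C,κ)).1) κ ∧ C = (F (C,κ)).1)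
       ∨ (b (F (C,κ)).1 < a (F (C,κ)).1 ∧ ¬ D (a (F (C,κ)).1) (F (C,κ)).2 ∧
          A (b (F (C,κ)).1) κ ∧ D (b (F (C,κ)).1) κ ∧
          (F (C,κ)).2 = op (b (F (C,κ)).1) κ ∧
          ((C = (F (C,κ)).1 ∧ ¬ D (a (F (C,κ)).1) κ) ∨ (C = st (F (C,κ)).1 ∧ D (a (F (C,κ)).1) κ)))) := by
    intro C hC κ hκ h1 h2
    have e1 := hab C hC
    have e2 := hba C hC
    have e3 := hst C hC
    have e4 := (hst2 C hC).symm
    by_cases hle : a C ≤ b C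
    · have h3 := hD _ _ _ hle h2
      obtain ⟨o1, o2, o3⟩ := hop (a C) κ hκ h1 h3
      by_cases hd : D (b C) (op (a C) κ)
      · have hF : F (C, κ) = (C, op (a C) κ) := by simp only [F, if_pos hle, if_pos hd]
        rw [hF]
        exact ⟨hC, o1, o2, hd, Or.inl ⟨hle, h1, h3, rfl, Or.inl ⟨rfl, h2⟩⟩⟩
      · have hF : F (C, κ) = (st C, op (a C) κ) := by simp only [F, if_pos hle, if_neg hd]
        rw [hF]
        have := (alive (b C) κ hκ (Or.inl h2) _ o1).resolve_left hd
        have hlt : a C < b C := by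
          rcases hle.lt_or_eq with h | h
          · exact h
          · exact absurd (h ▸ o3) hd
        simp only [e1, e2]
        exact ⟨e3, o1, this, o3, Or.inr (Or.inr ⟨hlt, hd, h1, h3, trivial, Or.inr ⟨e4, h2⟩⟩)⟩
    · have hle' : b C < a C := by omega
      have h3 := hA _ _ _ hle'.le h1
      by_cases hd : D (a C) κ
      · have hF : F (C, κ) = (C, op (a C) κ) := by simp only [F, if_neg hle, if_pos hd]
        rw [hF]
        obtain ⟨o1, o2, o3⟩ := hop (a C) κ hκ h1 hd
        exact ⟨hC, o1, o2, hD _ _ _ hle'.le o3, Or.inr (Or.inl ⟨hle', o3, h1, hd, rfl, rfl⟩)⟩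
      · obtain ⟨o1, o2, o3⟩ := hop (b C) κ hκ h3 h2
        by_cases hd' : D (a C) (op (b C) κ)
        · have hF : F (C, κ) = (st C, op (b C) κ) := by simp only [F, if_neg hle, if_neg hd, if_pos hd']
          rw [hF]
          simp only [e1, e2]
          exact ⟨e3, o1, o2, hd', Or.inl ⟨hle'.le, h3, h2, trivial, Or.inr ⟨e4, hd⟩⟩⟩
        · have hF : F (C, κ) = (C, op (b C) κ) := by simp only [F, if_neg hle, if_neg hd, if_neg hd']
          rw [hF]
          have := (alive (a C) κ hκ (Or.inr h1) _ o1).resolve_left hd'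
          exact ⟨hC, o1, this, o3, Or.inr (Or.inr ⟨hle', hd', h3, h2, rfl, Or.inl ⟨rfl, hd⟩⟩)⟩
  refine ⟨F, fun C hC κ hκ h1 h2 => ?_, ?_⟩
  · obtain ⟨x, y, z, w, _⟩ := desc C hC κ hκ h1 h2
    exact ⟨x, y, z, w⟩
  · intro C hC κ hκ h1 h2 C' hC' κ' hκ' h1' h2' he
    obtain ⟨-, -, -, -, d⟩ := desc C hC κ hκ h1 h2
    obtain ⟨-, -, -, -, d'⟩ := desc C' hC' κ' hκ' h1' h2'
    rw [← he] at d'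
    generalize F (C, κ) = y at d d'
    rcases d with ⟨d1, d2, d3, d4, d5⟩ | ⟨d1, d2, d3, d4, d5, d6⟩ | ⟨d1, d2, d3, d4, d5, d6⟩ <;>
    rcases d' with ⟨g1, g2, g3, g4, g5⟩ | ⟨g1, g2, g3, g4, g5, g6⟩ | ⟨g1, g2, g3, g4, g5, g6⟩
    · have := hinj _ κ hκ κ' hκ' d2 d3 g2 g3 (d4.symm.trans g4)
      subst this
      refine ⟨?_, rfl⟩
      rcases d5 with d5 | d5 <;> rcases g5 with g5 | g5
      · exact d5.1.trans g5.1.symm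
      · exact absurd d5.2 g5.2
      · exact absurd g5.2 d5.2
      · exact d5.1.trans g5.1.symm
    · omega
    · omega
    · omega
    · have := hinj _ κ hκ κ' hκ' d3 d4 g3 g4 (d5.symm.trans g5)
      exact ⟨d6.trans g6.symm, this⟩
    · exact absurd d2 g2
    · omega
    · exact absurd g2 d2
    · have := hinj _ κ hκ κ' hκ' d3 d4 g3 g4 (d5.symm.trans g5)
      subst this
      refine ⟨?_, rfl⟩
      rcases d6 with d5 | d5 <;> rcases g6 with g5 | g5
      · exact d5.1.trans g5.1.symm
      · exact absurd g5.2 d5.2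
      · exact absurd d5.2 g5.2
      · exact d5.1.trans g5.1.symm

end Rib

namespace Rib
open Finset

abbrev Sh := ℕ → ℕ

def Strip (l m : Sh) : Prop := ∀ a, l a ≤ m a ∧ m (a+1) ≤ l a

def hi (l r : Sh) : Sh
  | 0 => r 0
  | a+1 => min (l a) (r (a+1))

def lo (l r : Sh) : Sh := fun a => max (l a) (r (a+1))

def tog (l m r : Sh) : Sh := fun a => lo l r a + hi l r a - m a

def Des (l m r : Sh) : Prop := ∃ i i', i < i' ∧ l i < m i ∧ m i' < r i'

def sz (M : ℕ) (r : Sh) : ℕ := ∑ a ∈ range M, r a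

lemma lo_le_hi {l m r : Sh} (h1 : Strip l m) (h2 : Strip m r) (a : ℕ) :
    lo l r a ≤ m a ∧ m a ≤ hi l r a := by
  rcases a with _ | a
  · have := h1 0; have := h2 0; simp only [lo, hi]; omega
  · have := h1 (a+1); have := h1 a; have := h2 (a+1); simp only [lo, hi]; omega

lemma strip_of_between {l m r : Sh} (h : ∀ a, lo l r a ≤ m a ∧ m a ≤ hi l r a) :
    Strip l m ∧ Strip m r := by
  constructor
  · intro a
    have h1 := h a; have h2 := h (a+1); simp only [lo, hi] at h1 h2; omega
  · intro a
    have h1 := h a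
    rcases a with _ | a <;> simp only [lo, hi] at h1 <;> omega

lemma tog_add {l m r : Sh} (h1 : Strip l m) (h2 : Strip m r) (a : ℕ) :
    tog l m r a + m a = lo l r a + hi l r a := by
  have := lo_le_hi h1 h2 a
  unfold tog; omega

lemma tog_between {l m r : Sh} (h1 : Strip l m) (h2 : Strip m r) (a : ℕ) :
    lo l r a ≤ tog l m r a ∧ tog l m r a ≤ hi l r a := by
  have := lo_le_hi h1 h2 a
  have := tog_add h1 h2 a
  omega

lemma strip_tog1 {l m r : Sh} (h1 : Strip l m) (h2 : Strip m r) : Strip l (tog l m r) :=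
  (strip_of_between (tog_between h1 h2)).1

lemma strip_tog2 {l m r : Sh} (h1 : Strip l m) (h2 : Strip m r) : Strip (tog l m r) r :=
  (strip_of_between (tog_between h1 h2)).2

lemma tog_tog {l m r : Sh} (h1 : Strip l m) (h2 : Strip m r) : tog l (tog l m r) r = m := by
  funext a
  have := tog_add h1 h2 a
  unfold tog at *; omega

lemma sz_lohi (l r : Sh) (M : ℕ) :
    ∑ a ∈ range (M+1), (lo l r a + hi l r a) = sz (M+1) r + sz M l + max (l M) (r (M+1)) := by
  induction M with
  | zero => simp [sz, lo, hi]; omega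
  | succ M ih =>
    rw [sum_range_succ, ih]
    simp only [sz, sum_range_succ, lo, hi]; omega

lemma sz_tog {l m r : Sh} (h1 : Strip l m) (h2 : Strip m r) {M : ℕ} (hM : ∀ a, M ≤ a → r a = 0) :
    sz M (tog l m r) + sz M m = sz M l + sz M r := by
  have e : sz M (tog l m r) + sz M m = ∑ a ∈ range M, (lo l r a + hi l r a) := by
    unfold sz; rw [← sum_add_distrib]; exact sum_congr rfl fun a _ => tog_add h1 h2 a
  rw [e]
  rcases M with _ | M
  · simp [sz]
  · rw [sz_lohi, hM (M+1) le_rfl]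
    simp only [sz, sum_range_succ]; omega

lemma des_tog {l l' m' r' : Sh} (h0 : Strip l l') (h1 : Strip l' m') (h2 : Strip m' r') :
    Des l' m' r' ↔ Des l (tog l l' m') (tog (tog l l' m') m' r') := by
  have a1 := fun a => tog_add h0 h1 a
  have b1 := fun a => tog_between h0 h1 a
  have b0 := fun a => lo_le_hi h0 h1 a
  have s1 := strip_tog2 h0 h1
  generalize tog l l' m' = m at *
  have a2 := fun a => tog_add s1 h2 a
  have b2 := fun a => tog_between s1 h2 a
  have b3 := fun a => lo_le_hi s1 h2 a
  generalize tog m m' r' = r at *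
  constructor
  · rintro ⟨i, i', hlt, x, y⟩
    -- position for l < m
    have p1 : (l i < m i ∧ m' (i+1) < m i) ∨ ∃ k, i = k + 1 ∧ l k < m k := by
      rcases i with _ | k
      · left
        have e1 := a1 0; have e2 := h0 0
        simp only [lo, hi] at e1; omega
      · by_cases hc : l' (k+1) < l k
        · left
          have e1 := a1 (k+1); have e2 := b0 (k+1)
          simp only [lo, hi] at e1 e2; omega
        · right
          refine ⟨k, rfl, ?_⟩
          have e1 := b1 k; have e2 := h0 k
          simp only [lo] at e1; omega
    have p2 : m i' < r i' ∨ ∃ k, i' = k + 1 ∧ m k < r k ∧ m' (k+1) = m k := by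
      rcases i' with _ | k
      · omega
      · by_cases hc : m' (k+1) < m k
        · left
          have e1 := a2 (k+1); have e2 := b3 (k+1)
          simp only [lo, hi] at e1 e2; omega
        · right
          refine ⟨k, rfl, ?_⟩
          have e1 := b2 k; have e2 := s1 k
          simp only [lo] at e1; omega
    rcases p1 with p1 | ⟨k, rfl, p1⟩ <;> rcases p2 with p2 | ⟨k', rfl, p2⟩
    · exact ⟨i, i', hlt, p1.1, p2⟩
    · refine ⟨i, k', ?_, p1.1, p2.1⟩
      rcases Nat.lt_or_ge i k' with h | h
      · exact h
      · have : i = k' := by omega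
        subst this; omega
    · exact ⟨k, i', by omega, p1, p2⟩
    · exact ⟨k, k', by omega, p1, p2.1⟩
  · rintro ⟨i, i', hlt, x, y⟩
    have p1 : l' i < m' i ∨ (l' (i+1) < m' (i+1) ∧ m i ≤ m' (i+1)) := by
      rcases i with _ | k
      · have e1 := a1 0; have e2 := h0 0; have e3 := h1 0
        simp only [lo, hi] at e1; omega
      · have e1 := a1 (k+1); have e2 := h0 (k+1); have e3 := h1 (k+1); have e4 := h0 k
        simp only [lo, hi] at e1; omega
    have p2 : (m' i' < r' i' ∧ ∀ k, i' = k+1 → m' (k+1) < m k) ∨ m' (i'+1) < r' (i'+1) := by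
      rcases i' with _ | k
      · omega
      · have e1 := a2 (k+1); have e2 := s1 (k+1); have e3 := h2 (k+1); have e4 := s1 k
        simp only [lo, hi] at e1
        by_cases hc : m (k+1) < r' (k+1+1)
        · right; omega
        · left
          refine ⟨by omega, ?_⟩
          intro k' hk
          have : k = k' := by omega
          subst this; omega
    rcases p1 with p1 | p1 <;> rcases p2 with p2 | p2
    · exact ⟨i, i', hlt, p1, p2.1⟩
    · exact ⟨i, i'+1, by omega, p1, p2⟩
    · refine ⟨i+1, i', ?_, p1.1, p2.1⟩
      rcases Nat.lt_or_ge (i+1) i' with h | h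
      · exact h
      · have := p2.2 i (by omega)
        omega
    · exact ⟨i+1, i'+1, by omega, p1.1, p2⟩

end Rib

namespace Rib
open Finset

def hd (l : List Sh) : Sh := l.headD (fun _ => 0)

def Dn : List Sh → List Sh
  | [] => []
  | [_] => []
  | [_, _] => [fun _ => 0]
  | r :: m :: n :: l => tog (hd (Dn (m :: n :: l))) m r :: Dn (m :: n :: l)

def Sc : List Sh → Prop
  | [] => False
  | [z] => z = fun _ => 0
  | r :: m :: l => Strip m r ∧ Sc (m :: l)

def AllDes : List Sh → Prop
  | r :: m :: n :: l => Des n m r ∧ AllDes (m :: n :: l)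
  | _ => True

def Rows (M : ℕ) : List ℕ → List Sh → Prop
  | [], [_] => True
  | y :: α, r :: l => sz M r = sz M (hd l) + y ∧ Rows M α l
  | _, _ => False

def Up : Sh → List Sh → List Sh
  | r, k :: n :: l => r :: Up (tog n k r) (n :: l)
  | r, _ => [r, fun _ => 0]

def evn : ℕ → List Sh → List Sh
  | 0, l => l
  | n+1, l => hd l :: evn n (Dn l)

@[simp] lemma hd_cons (r : Sh) (l : List Sh) : hd (r :: l) = r := rfl

lemma Dn_cons (r : Sh) {l : List Sh} (h : 2 ≤ l.length) :
    Dn (r :: l) = tog (hd (Dn l)) (hd l) r :: Dn l := by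
  match l, h with
  | m :: n :: l, _ => rfl

lemma Sc_cons (r : Sh) {l : List Sh} (h : 1 ≤ l.length) : Sc (r :: l) ↔ Strip (hd l) r ∧ Sc l := by
  match l, h with
  | m :: l, _ => rfl

lemma AllDes_cons (r : Sh) {l : List Sh} (h : 2 ≤ l.length) :
    AllDes (r :: l) ↔ Des (hd l.tail) (hd l) r ∧ AllDes l := by
  match l, h with
  | m :: n :: l, _ => rfl

lemma tail_Dn (r : Sh) {l : List Sh} (h : 2 ≤ l.length) : (Dn (r :: l)).tail = Dn l := by
  rw [Dn_cons r h]; rfl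

lemma Sc_Dn : ∀ l : List Sh, Sc l → 2 ≤ l.length →
    Sc (Dn l) ∧ Strip (hd (Dn l)) (hd l) ∧ (Dn l).length + 1 = l.length
  | [], h, _ => h.elim
  | [z], _, h => by simp at h
  | [r, z], h, _ => by
    obtain ⟨h1, h2⟩ := h
    have h2 : z = fun _ => 0 := h2
    subst h2
    exact ⟨rfl, h1, rfl⟩
  | r :: m :: n :: l, h, _ => by
    obtain ⟨h1, h2⟩ := h
    obtain ⟨a, b, c⟩ := Sc_Dn (m :: n :: l) h2 (by simp)
    have h3 : 2 ≤ (m :: n :: l).length := by simp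
    rw [Dn_cons r h3]
    have h4 : 1 ≤ (Dn (m :: n :: l)).length := by omega
    refine ⟨(Sc_cons _ h4).2 ⟨strip_tog1 b h1, a⟩, strip_tog2 b h1, ?_⟩
    simp at c ⊢; omega

lemma Up_spec : ∀ (l : List Sh) (r : Sh), Sc l → Strip (hd l) r →
    Sc (Up r l) ∧ Dn (Up r l) = l ∧ hd (Up r l) = r ∧ (Up r l).length = l.length + 1
  | [], _, h, _ => h.elim
  | [z], r, h, h' => by
    have h2 : z = fun _ => 0 := h
    subst h2
    exact ⟨⟨h', rfl⟩, rfl, rfl, rfl⟩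
  | k :: n :: l, r, h, h' => by
    obtain ⟨h1, h2⟩ := h
    have h' : Strip k r := h'
    obtain ⟨a, b, c, d⟩ := Up_spec (n :: l) (tog n k r) h2 (strip_tog1 h1 h')
    have h3 : 2 ≤ (Up (tog n k r) (n :: l)).length := by rw [d]; simp
    refine ⟨?_, ?_, rfl, by simp [Up, d]⟩
    · rw [Up, Sc_cons _ (by omega), c]
      exact ⟨strip_tog2 h1 h', a⟩
    · rw [Up, Dn_cons _ h3, b, c, hd_cons, tog_tog h1 h']

lemma Up_Dn : ∀ l : List Sh, Sc l → 2 ≤ l.length → Up (hd l) (Dn l) = l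
  | [], h, _ => h.elim
  | [z], _, h => by simp at h
  | [r, z], h, _ => by
    obtain ⟨h1, h2⟩ := h
    have h2 : z = fun _ => 0 := h2
    subst h2
    rfl
  | r :: m :: n :: l, h, _ => by
    obtain ⟨h1, h2⟩ := h
    have h3 : 2 ≤ (m :: n :: l).length := by simp
    obtain ⟨a, b, c⟩ := Sc_Dn (m :: n :: l) h2 h3
    have ih := Up_Dn (m :: n :: l) h2 h3
    rw [Dn_cons r h3]
    obtain ⟨x, t, ht⟩ : ∃ x t, Dn (m :: n :: l) = x :: t := by
      rcases hD : Dn (m :: n :: l) with _ | ⟨x, t⟩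
      · simp [hD] at c
      · exact ⟨x, t, rfl⟩
    rw [ht] at b ih ⊢
    simp only [hd_cons] at b ih ⊢
    rw [Up, tog_tog b h1, ih]

lemma evn_len : ∀ n l, Sc l → l.length = n + 1 → (evn n l).length = n + 1 ∧ hd (evn n l) = hd l ∧ Sc (evn n l)
  | 0, l, h, h' => ⟨h', rfl, h⟩
  | n+1, l, h, h' => by
    obtain ⟨a, b, c⟩ := Sc_Dn l h (by omega)
    obtain ⟨x, y, z⟩ := evn_len n (Dn l) a (by omega)
    refine ⟨by simp [evn, x], rfl, ?_⟩
    rw [evn, Sc_cons _ (by omega), y]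
    exact ⟨b, z⟩

lemma Dn_evn : ∀ n l, Sc l → l.length = n + 2 → Dn (evn (n+1) l) = evn n l.tail
  | 0, [r, z], h, _ => by
    obtain ⟨h1, h2⟩ := h
    have h2 : z = fun _ => 0 := h2
    subst h2
    rfl
  | n+1, r :: l, h, h' => by
    have hl : l.length = n + 2 := by simpa using h'
    obtain ⟨h1, h2⟩ := (Sc_cons r (by omega)).1 h
    obtain ⟨a, b, c⟩ := Sc_Dn _ h (by omega)
    obtain ⟨a', b', c'⟩ := Sc_Dn l h2 (by omega)
    have ih := Dn_evn n (Dn (r :: l)) a (by omega)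
    obtain ⟨x, y, z⟩ := evn_len (n+1) (Dn (r :: l)) a (by omega)
    obtain ⟨x', y', z'⟩ := evn_len n (Dn l) a' (by omega)
    rw [evn, Dn_cons _ (by omega), ih, y, tail_Dn r (by omega), y', List.tail_cons, evn,
      Dn_cons r (by omega), hd_cons, hd_cons, tog_tog b' h1]

lemma evn_evn : ∀ n l, Sc l → l.length = n + 1 → evn n (evn n l) = l
  | 0, _, _, _ => rfl
  | n+1, r :: l, h, h' => by
    have hl : l.length = n + 1 := by simpa using h'
    obtain ⟨h1, h2⟩ := (Sc_cons r (by omega)).1 h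
    rw [evn, Dn_evn n _ h h', List.tail_cons, evn_evn n l h2 hl]
    rfl

lemma hd_tail_evn {n l} (h : Sc l) (h' : l.length = n + 2) : hd (evn (n+1) l).tail = hd (Dn l) := by
  obtain ⟨a, b, c⟩ := Sc_Dn _ h (by omega)
  rw [evn, List.tail_cons, (evn_len n _ a (by omega)).2.1]

lemma hd_Dn_evn {n l} (h : Sc l) (h' : l.length = n + 2) : hd (Dn (evn (n+1) l)) = hd l.tail := by
  rw [Dn_evn n l h h']
  match l, h' with
  | r :: l, h' =>
    have hl : l.length = n + 1 := by simpa using h'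
    obtain ⟨h1, h2⟩ := (Sc_cons r (by omega)).1 h
    exact (evn_len n l h2 hl).2.1

/-- moving a descent one column to the left -/
lemma des_col (r t : Sh) {l : List Sh} (hl : 2 ≤ l.length) (h : Sc (r :: l)) (ht : Strip r t) :
    Des (hd (Dn (r :: l))) r t ↔ Des (hd (Dn l)) (hd l) (tog (hd l) r t) := by
  obtain ⟨h1, h2⟩ := (Sc_cons r (by omega)).1 h
  obtain ⟨a', b', c'⟩ := Sc_Dn l h2 hl
  rw [Dn_cons r hl, hd_cons, des_tog (strip_tog1 b' h1) (strip_tog2 b' h1) ht, tog_tog b' h1]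

/-- moving a descent one row down -/
lemma des_row (r t : Sh) {l : List Sh} (hl : 2 ≤ l.length) (h : Sc (r :: l)) (ht : Strip r t) :
    Des (hd l) r t ↔ Des (hd (Dn l)) (hd (Dn (r :: l))) (tog (hd (Dn (r :: l))) r t) := by
  obtain ⟨h1, h2⟩ := (Sc_cons r (by omega)).1 h
  obtain ⟨a', b', c'⟩ := Sc_Dn l h2 hl
  rw [Dn_cons r hl, hd_cons, des_tog b' h1 ht]

lemma des_base {m r : Sh} (h1 : Strip (fun _ => 0) m) (h2 : Strip m r) :
    Des (fun _ => 0) m r ↔ 0 < r 1 := by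
  constructor
  · rintro ⟨i, i', h, x, y⟩
    have hi' : i' = 1 := by
      rcases i' with _ | _ | k
      · omega
      · rfl
      · exfalso
        have := h2 (k+1); have := h1 k
        simp at *; omega
    subst hi'; omega
  · intro h
    have e1 := h2 0; have e2 := h1 0; simp at e1 e2
    exact ⟨0, 1, by omega, by show 0 < m 0; omega, by omega⟩

lemma AllDes_Dn : ∀ l : List Sh, Sc l → 3 ≤ l.length →
    (AllDes l ↔ AllDes (Dn l) ∧ Des (hd (Dn (Dn l))) (hd (Dn l)) (hd l))
  | [], h, _ => h.elim
  | [_], _, h => by simp at h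
  | [_, _], _, h => by simp at h
  | [r, m, z], h, _ => by
    obtain ⟨h1, h2, h3⟩ := h
    have h3 : z = fun _ => 0 := h3
    subst h3
    have e : AllDes [r, m, fun _ => 0] ↔ Des (fun _ => 0) m r := by simp [AllDes]
    have e2 : Dn [r, m, fun _ => 0] = [tog (fun _ => 0) m r, fun _ => 0] := rfl
    rw [e, e2]
    simp only [AllDes, Dn, hd_cons, true_and]
    rw [des_base h2 h1, des_base (strip_tog1 h2 h1) (strip_tog2 h2 h1)]
  | r :: m :: n :: o :: l, h, _ => by
    obtain ⟨h1, h2⟩ := h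
    have ih := AllDes_Dn (m :: n :: o :: l) h2 (by simp)
    have hl : 3 ≤ (m :: n :: o :: l).length := by simp
    have hm : m = hd (m :: n :: o :: l) := rfl
    have hn : n :: o :: l = (m :: n :: o :: l).tail := rfl
    obtain ⟨a, b, c⟩ := Sc_Dn _ h2 (by omega)
    have d1 : Des n m r ↔ _ := des_row m r (l := n :: o :: l) (by simp) h2 h1
    have hD : Dn (r :: m :: n :: o :: l) = tog (hd (Dn (m :: n :: o :: l))) m r :: Dn (m :: n :: o :: l) := rfl
    have htl : (Dn (m :: n :: o :: l)).tail = Dn (n :: o :: l) := rfl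
    have hS : Sc (Dn (r :: m :: n :: o :: l)) := (Sc_Dn _ (show Sc (r :: m :: n :: o :: l) from ⟨h1, h2⟩) (by simp)).1
    rw [AllDes_cons r (by omega), ih, hD, AllDes_cons _ (by omega), htl]
    have d2 := des_col (tog (hd (Dn (m :: n :: o :: l))) m r) r (l := Dn (m :: n :: o :: l)) (by omega)
      (by rw [← hD]; exact hS) (strip_tog2 b h1)
    simp only [hd_cons]
    have tt : tog (hd (Dn (m :: n :: o :: l))) (tog (hd (Dn (m :: n :: o :: l))) m r) r = m :=
      tog_tog b h1
    rw [d2, tt]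
    show (Des n m r ∧ _) ↔ _
    rw [d1]
    tauto

end Rib

namespace Rib
open Finset

structure Ok (M : ℕ) (α : List ℕ) (l : List Sh) : Prop where
  sc : Sc l
  rows : Rows M α l
  des : AllDes l
  sup : ∀ a, M ≤ a → hd l a = 0

lemma Rows_len {M : ℕ} : ∀ {α l}, Rows M α l → l.length = α.length + 1
  | [], [_], _ => rfl
  | y :: α, r :: l, h => by simp [Rows_len h.2]
  | [], [], h => h.elim
  | [], _ :: _ :: _, h => h.elim
  | _ :: _, [], h => h.elim

lemma Ok.len {M α l} (h : Ok M α l) : l.length = α.length + 1 := Rows_len h.rows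

lemma sup_strip {M : ℕ} {m r : Sh} (h : Strip m r) (hr : ∀ a, M ≤ a → r a = 0) : ∀ a, M ≤ a → m a = 0 := by
  intro a ha; have := (h a).1; have := hr a ha; omega

lemma Ok_cons {M y α r l} (hα : α ≠ []) : Ok M (y :: α) (r :: l) ↔
    Strip (hd l) r ∧ sz M r = sz M (hd l) + y ∧ Ok M α l ∧ Des (hd l.tail) (hd l) r ∧
      ∀ a, M ≤ a → r a = 0 := by
  have hα : 1 ≤ α.length := List.length_pos_iff.2 hα
  constructor
  · rintro ⟨h1, ⟨h2, h2'⟩, h3, h4⟩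
    have hl := Rows_len h2'
    rw [Sc_cons _ (by omega)] at h1
    rw [AllDes_cons _ (by omega)] at h3
    exact ⟨h1.1, h2, ⟨h1.2, h2', h3.2, sup_strip h1.1 h4⟩, h3.1, h4⟩
  · rintro ⟨h1, h2, h3, h4, h5⟩
    have hl := h3.len
    refine ⟨(Sc_cons _ (by omega)).2 ⟨h1, h3.sc⟩, ⟨h2, h3.rows⟩, ?_, h5⟩
    rw [AllDes_cons _ (by omega)]
    exact ⟨h4, h3.des⟩

lemma Rows_snoc {M x : ℕ} : ∀ (α : List ℕ) (l : List Sh), Sc l → l.length = α.length + 2 →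
    (∀ a, M ≤ a → hd l a = 0) →
    (Rows M (α ++ [x]) l ↔ Rows M α (Dn l) ∧ sz M (hd l) = sz M (hd (Dn l)) + x)
  | [], [r, z], h, _, h'' => by
    obtain ⟨h1, h2⟩ := h
    have h2 : z = fun _ => 0 := h2
    subst h2
    simp [Rows, Dn]
  | y :: α, r :: l, h, h', h'' => by
    have hl : l.length = α.length + 2 := by simpa using h'
    obtain ⟨h1, h2⟩ := (Sc_cons r (by omega)).1 h
    obtain ⟨a, b, c⟩ := Sc_Dn l h2 (by omega)
    have ih := Rows_snoc (x := x) α l h2 hl (sup_strip h1 h'')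
    have e := sz_tog b h1 h''
    rw [Dn_cons r (by omega)]
    simp only [List.cons_append, Rows, hd_cons]
    rw [ih]
    constructor
    · rintro ⟨p1, p2, p3⟩
      exact ⟨⟨by omega, p2⟩, by omega⟩
    · rintro ⟨⟨p1, p2⟩, p3⟩
      exact ⟨by omega, p2, by omega⟩

lemma Ok_snoc {M x α l} (hα : α ≠ []) : Ok M (α ++ [x]) l ↔
    Sc l ∧ l.length = α.length + 2 ∧ Ok M α (Dn l) ∧ sz M (hd l) = sz M (hd (Dn l)) + x ∧
     Des (hd (Dn (Dn l))) (hd (Dn l)) (hd l) ∧ ∀ a, M ≤ a → hd l a = 0 := by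
  have hα : 1 ≤ α.length := List.length_pos_iff.2 hα
  constructor
  · rintro ⟨h1, h2, h3, h4⟩
    have hl : l.length = α.length + 2 := by simpa using Rows_len h2
    rw [Rows_snoc α l h1 hl h4] at h2
    rw [AllDes_Dn l h1 (by omega)] at h3
    obtain ⟨a, b, c⟩ := Sc_Dn l h1 (by omega)
    exact ⟨h1, hl, ⟨a, h2.1, h3.1, sup_strip b h4⟩, h2.2, h3.2, h4⟩
  · rintro ⟨h1, hl, h2, h3, h4, h5⟩
    refine ⟨h1, (Rows_snoc α l h1 hl h5).2 ⟨h2.rows, h3⟩, ?_, h5⟩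
    rw [AllDes_Dn l h1 (by omega)]
    exact ⟨h2.des, h4⟩

lemma Ok_rev {M : ℕ} (α : List ℕ) : ∀ l, Ok M α l → Ok M α.reverse (evn α.length l) := by
  induction α using List.reverseRecOn with
  | nil => intro l h; exact h
  | append_singleton α x ih =>
    intro l h
    by_cases hα : α = []
    · subst hα
      have hl := h.len
      match l, hl with
      | [r, z], _ =>
        have h2 : z = fun _ => 0 := h.sc.2
        subst h2
        exact h
    · obtain ⟨h1, hl, h2, h3, h4, h5⟩ := (Ok_snoc hα).1 h
      have ih := ih _ h2
      have hl2 := h2.len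
      obtain ⟨a, b, c⟩ := Sc_Dn l h1 (by omega)
      obtain ⟨x1, x2, x3⟩ := evn_len α.length (Dn l) a hl2
      have : (α ++ [x]).reverse = x :: α.reverse := by simp
      rw [this]
      have : (α ++ [x]).length = α.length + 1 := by simp
      rw [this, evn, Ok_cons (by simpa using hα), x2]
      refine ⟨b, h3, ih, ?_, h5⟩
      obtain ⟨k, hk⟩ : ∃ k, α.length = k + 1 := ⟨α.length - 1, by have := List.length_pos_iff.2 hα; omega⟩
      rw [hk, hd_tail_evn a (by omega)]
      exact h4

def Inj (P Q : List Sh → Prop) : Prop :=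
  ∃ F : List Sh → List Sh, (∀ l, P l → Q (F l)) ∧ ∀ l l', P l → P l' → F l = F l' → l = l'

structure PP (M : ℕ) (α : List ℕ) (ρ : Sh) (E L : Sh → Prop) (l : List Sh) : Prop where
  ok : Ok M α l
  hd : hd l = ρ
  e : ∀ τ, E τ → Des (Rib.hd (Dn l)) ρ τ
  l : ∀ τ, L τ → Des (Rib.hd l.tail) ρ τ

def Stmt (M : ℕ) (α β : List ℕ) : Prop := ∀ (ρ : Sh) (E L : Sh → Prop), (∀ τ, E τ → Strip ρ τ) →
  (∀ τ, L τ → Strip ρ τ) → Inj (PP M α ρ E L) (PP M β ρ E L)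

lemma Stmt_rev {M α β} (hα : α ≠ []) (hβ : β ≠ []) (h : Stmt M α β) : Stmt M α.reverse β.reverse := by
  intro ρ E L hE hL
  obtain ⟨F, h1, h2⟩ := h ρ L E hL hE
  have key : ∀ (α : List ℕ) (hα : α ≠ []) l E L, PP M α ρ E L l → PP M α.reverse ρ L E (evn α.length l) := by
    intro α hα l E L h
    have hl := h.ok.len
    obtain ⟨k, hk⟩ : ∃ k, α.length = k + 1 := ⟨α.length - 1, by have := List.length_pos_iff.2 hα; omega⟩
    obtain ⟨x1, x2, x3⟩ := evn_len α.length l h.ok.sc hl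
    refine ⟨Ok_rev α l h.ok, x2.trans h.hd, ?_, ?_⟩
    · rw [hk, hd_Dn_evn h.ok.sc (by omega)]; exact h.l
    · rw [hk, hd_tail_evn h.ok.sc (by omega)]; exact h.e
  refine ⟨fun l => evn β.length (F (evn α.length l)), ?_, ?_⟩
  · intro l hl
    have := key _ (by simpa using hα) l _ _ hl
    rw [List.reverse_reverse, List.length_reverse] at this
    exact key _ hβ _ _ _ (h1 _ this)
  · intro l l' hl hl' e
    have k1 := key _ (by simpa using hα) l _ _ hl
    have k2 := key _ (by simpa using hα) l' _ _ hl'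
    rw [List.reverse_reverse, List.length_reverse] at k1 k2
    have m1 := (h1 _ k1).ok
    have m2 := (h1 _ k2).ok
    have e2 : F (evn α.length l) = F (evn α.length l') := by
      have := congrArg (evn β.length) e
      simp only at this
      rwa [evn_evn _ _ m1.sc m1.len, evn_evn _ _ m2.sc m2.len] at this
    have e3 := h2 _ _ k1 k2 e2
    have := congrArg (evn α.length) e3
    rwa [evn_evn _ _ hl.ok.sc (by simpa using hl.ok.len), evn_evn _ _ hl'.ok.sc (by simpa using hl'.ok.len)] at this

lemma PP_cons {M y α ρ r l} {E L : Sh → Prop} (hα : α ≠ []) (hE : ∀ τ, E τ → Strip ρ τ) :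
    PP M (y :: α) ρ E L (r :: l) ↔
    r = ρ ∧ Strip (hd l) ρ ∧ sz M ρ = sz M (hd l) + y ∧ (∀ a, M ≤ a → ρ a = 0) ∧
     (∀ τ, L τ → Des (hd l) ρ τ) ∧
      PP M α (hd l) (fun σ => ∃ τ, E τ ∧ σ = tog (hd l) ρ τ) (fun σ => σ = ρ) l := by
  have hα' : 1 ≤ α.length := List.length_pos_iff.2 hα
  constructor
  · rintro ⟨h1, h2, h3, h4⟩
    have h2 : r = ρ := h2
    subst h2
    have h0 := h1.sc
    rw [Ok_cons hα] at h1
    obtain ⟨a, b, c, d, e⟩ := h1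
    have hl := c.len
    refine ⟨rfl, a, b, e, h4, ⟨c, rfl, ?_, ?_⟩⟩
    · rintro _ ⟨τ, hτ, rfl⟩
      exact (des_col r τ (by omega) h0 (hE τ hτ)).1 (h3 τ hτ)
    · rintro _ rfl
      exact d
  · rintro ⟨rfl, h1, h2, h3, h4, h5⟩
    have h0 : Ok M (y :: α) (r :: l) := (Ok_cons hα).2 ⟨h1, h2, h5.ok, h5.l _ rfl, h3⟩
    refine ⟨h0, rfl, ?_, h4⟩
    intro τ hτ
    have hl := h5.ok.len
    exact (des_col r τ (by omega) h0.sc (hE τ hτ)).2 (h5.e _ ⟨τ, hτ, rfl⟩)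

lemma Stmt_cons {M y α β} (hα : α ≠ []) (hβ : β ≠ []) (h : Stmt M α β) : Stmt M (y :: α) (y :: β) := by
  intro ρ E L hE hL
  have key : ∀ κ : Sh, ∃ F : List Sh → List Sh, Strip κ ρ →
      (∀ l, PP M α κ (fun σ => ∃ τ, E τ ∧ σ = tog κ ρ τ) (fun σ => σ = ρ) l →
        PP M β κ (fun σ => ∃ τ, E τ ∧ σ = tog κ ρ τ) (fun σ => σ = ρ) (F l)) ∧
      ∀ l l', PP M α κ (fun σ => ∃ τ, E τ ∧ σ = tog κ ρ τ) (fun σ => σ = ρ) l →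
        PP M α κ (fun σ => ∃ τ, E τ ∧ σ = tog κ ρ τ) (fun σ => σ = ρ) l' → F l = F l' → l = l' := by
    intro κ
    by_cases hκ : Strip κ ρ
    · obtain ⟨F, h1, h2⟩ := h κ (fun σ => ∃ τ, E τ ∧ σ = tog κ ρ τ) (fun σ => σ = ρ)
        (by rintro _ ⟨τ, hτ, rfl⟩; exact strip_tog1 hκ (hE τ hτ)) (by rintro _ rfl; exact hκ)
      exact ⟨F, fun _ => ⟨h1, h2⟩⟩
    · exact ⟨id, fun h => (hκ h).elim⟩
  choose F hF using key
  refine ⟨fun l => ρ :: F (hd l.tail) l.tail, ?_, ?_⟩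
  · intro l hl
    match l, hl with
    | [], hl => exact hl.ok.sc.elim
    | r :: l, hl =>
      rw [PP_cons hα hE] at hl
      obtain ⟨rfl, a, b, c, d, e⟩ := hl
      have e' := (hF _ a).1 l e
      simp only [List.tail_cons]
      rw [PP_cons hβ hE, e'.hd]
      exact ⟨rfl, a, b, c, d, e'⟩
  · intro l l' hl hl' eq
    match l, hl, l', hl' with
    | [], hl, _, _ => exact hl.ok.sc.elim
    | _, _, [], hl => exact hl.ok.sc.elim
    | r :: l, hl, r' :: l', hl' =>
      rw [PP_cons hα hE] at hl hl'
      obtain ⟨rfl, a, b, c, d, e⟩ := hl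
      obtain ⟨rfl, a', b', c', d', e'⟩ := hl'
      simp only [List.tail_cons, List.cons.injEq, true_and] at eq
      have e1 := (hF _ a).1 l e
      have e1' := (hF _ a').1 l' e'
      have hh : hd l = hd l' := by rw [← e1.hd, ← e1'.hd, eq]
      have := (hF _ a).2 l l' e (by rw [hh]; exact e') (by rw [eq, hh])
      rw [this]

lemma Stmt_pre {M α β} (hα : α ≠ []) (hβ : β ≠ []) (h : Stmt M α β) : ∀ Y, Stmt M (Y ++ α) (Y ++ β)
  | [] => h
  | y :: Y => Stmt_cons (by simp [hα]) (by simp [hβ]) (Stmt_pre hα hβ h Y)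

lemma Stmt_post {M α β} (hα : α ≠ []) (hβ : β ≠ []) (h : Stmt M α β) (X) : Stmt M (α ++ X) (β ++ X) := by
  have h1 := Stmt_rev hα hβ h
  have h2 := Stmt_pre (by simpa using hα) (by simpa using hβ) h1 X.reverse
  have h3 := Stmt_rev (by simp [hα]) (by simp [hβ]) h2
  simpa using h3

end Rib

namespace Rib
open Finset

lemma sm_pos {M j : ℕ} {q : ℕ → ℕ} : 0 < sm M j q ↔ ∃ i, j ≤ i ∧ i < M ∧ 0 < q i := by
  unfold sm
  rw [Finset.sum_pos_iff_of_nonneg (by intros; positivity)]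
  simp [and_assoc]

lemma sm_lt {M j : ℕ} {q f : ℕ → ℕ} (h : ∀ i, q i ≤ f i) :
    sm M j q < sm M j f ↔ ∃ i, j ≤ i ∧ i < M ∧ q i < f i := by
  have : sm M j f = sm M j q + sm M j (fun i => f i - q i) := by
    unfold sm; rw [← sum_add_distrib]; apply sum_congr rfl; intro i _
    have := h i; push_cast [this]; ring
  have h2 := sm_pos (M := M) (j := j) (q := fun i => f i - q i)
  simp only [Nat.sub_pos_iff_lt] at h2
  rw [← h2, this]
  constructor <;> intro h <;> linarith

def pk (l r κ : Sh) : Sh := fun i => hi l r i - κ i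
def ff (l r : Sh) : Sh := fun i => hi l r i - lo l r i

structure SS (M : ℕ) (l r : Sh) (E L : Sh → Prop) (q p : ℕ) (κ : Sh) : Prop where
  s1 : Strip l κ
  s2 : Strip κ r
  z1 : sz M κ = sz M l + q
  z2 : sz M r = sz M κ + p
  e : ∀ τ, E τ → Des κ r τ
  l : ∀ τ, L τ → Des (tog l κ r) r τ

lemma sz_sm (M : ℕ) (q : Sh) : (sz M q : ℤ) = sm M 0 q := by
  unfold sz sm; push_cast; congr 1; simp

lemma kop {M : ℕ} {l r : Sh} (hM : ∀ a, M ≤ a → r a = 0) (E L : Sh → Prop) (q p : ℕ) (hpq : q + 2 ≤ p)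
    (fc : Prop) (j : ℕ) (hj : j ≤ M) : ∃ op : Sh → Sh,
    (∀ κ, SS M l r E L q p κ → Low (ff l r) M fc j (pk l r κ) →
      SS M l r E L (q+1) (p-1) (op κ) ∧ Low (ff l r) M fc j (pk l r (op κ))) ∧
    ∀ κ κ', SS M l r E L q p κ → Low (ff l r) M fc j (pk l r κ) →
      SS M l r E L q p κ' → Low (ff l r) M fc j (pk l r κ') → op κ = op κ' → κ = κ' := by
  obtain ⟨op, h1, h2⟩ := core (ff l r) M fc j hj
  have hle : ∀ κ, SS M l r E L q p κ → ∀ i, pk l r κ i ≤ ff l r i := by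
    intro κ hκ i
    have := lo_le_hi hκ.s1 hκ.s2 i
    simp only [pk, ff]; omega
  have hsum : ∀ κ, SS M l r E L q p κ → sm M 0 (ff l r) + 2 ≤ 2 * sm M 0 (pk l r κ) := by
    intro κ hκ
    have t := sz_tog hκ.s1 hκ.s2 hM
    have e : sm M 0 (ff l r) + sz M (tog l κ r) = 2 * sm M 0 (pk l r κ) + sz M κ := by
      rw [sz_sm, sz_sm]
      unfold sm
      rw [mul_sum, ← sum_add_distrib, ← sum_add_distrib]
      apply sum_congr rfl
      intro i _
      have := lo_le_hi hκ.s1 hκ.s2 i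
      have := tog_add hκ.s1 hκ.s2 i
      simp only [ff, pk]; omega
    have := hκ.z1; have := hκ.z2
    omega
  have hpp : ∀ κ, SS M l r E L q p κ → Low (ff l r) M fc j (pk l r κ) →
      pk l r (fun i => hi l r i - op (pk l r κ) i) = op (pk l r κ) := by
    intro κ hκ hl
    obtain ⟨a, b, c, d⟩ := h1 _ (hle κ hκ) hl (hsum κ hκ)
    funext i
    have := b i; have : pk l r κ i ≤ hi l r i := by simp only [pk]; omega
    simp only [pk] at *; omega
  refine ⟨fun κ i => hi l r i - op (pk l r κ) i, ?_, ?_⟩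
  · intro κ hκ hl
    obtain ⟨a, b, c, d⟩ := h1 _ (hle κ hκ) hl (hsum κ hκ)
    have hb : ∀ i, lo l r i ≤ hi l r i - op (pk l r κ) i ∧ hi l r i - op (pk l r κ) i ≤ hi l r i := by
      intro i
      have := b i; have := hle κ hκ i; have := lo_le_hi hκ.s1 hκ.s2 i
      constructor
      · simp only [ff] at *; omega
      · omega
    have hs := strip_of_between hb
    have hz : sz M (fun i => hi l r i - op (pk l r κ) i) = sz M κ + 1 := by
      have e1 : (sz M (fun i => hi l r i - op (pk l r κ) i) : ℤ) + sm M 0 (op (pk l r κ)) =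
          sz M κ + sm M 0 (pk l r κ) := by
        rw [sz_sm, sz_sm]; unfold sm
        rw [← sum_add_distrib, ← sum_add_distrib]
        apply sum_congr rfl
        intro i _
        have := b i; have := lo_le_hi hκ.s1 hκ.s2 i
        simp only [pk] at *; omega
      omega
    have := hκ.z1; have := hκ.z2
    refine ⟨⟨hs.1, hs.2, by beta_reduce; omega, by beta_reduce; omega, ?_, ?_⟩, ?_⟩
    · intro τ hτ
      obtain ⟨i, i', x, y, z⟩ := hκ.e τ hτ
      by_cases hc : hi l r i < r i
      · exact ⟨i, i', x, by have := (hb i).2; simp only; omega, z⟩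
      · have : 0 < pk l r κ i := by simp only [pk]; omega
        obtain ⟨k, hk, hk'⟩ := d i' ⟨i, x, this⟩
        refine ⟨k, i', hk, ?_, z⟩
        have e1 : hi l r k ≤ r k := by
          rcases k with _ | k <;> simp only [hi] <;> omega
        have := b k; simp only [pk] at this
        beta_reduce; omega
    · intro τ hτ
      obtain ⟨i, i', x, y, z⟩ := hκ.l τ hτ
      refine ⟨i, i', x, ?_, z⟩
      have := tog_add hκ.s1 hκ.s2 i
      have e2 := tog_add hs.1 hs.2 i
      have e3 := b i; have e4 := lo_le_hi hκ.s1 hκ.s2 i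
      simp only [pk] at e3 e2 ⊢; omega
    · rw [hpp κ hκ hl]; exact a
  · intro κ κ' hκ hl hκ' hl' e
    have e' := congrArg (pk l r) e
    simp only at e'
    rw [hpp κ hκ hl, hpp κ' hκ' hl'] at e'
    have := h2 _ _ (hle κ hκ) hl (hsum κ hκ) (hle κ' hκ') hl' (hsum κ' hκ') e'
    funext i
    have h3 := congrFun this i
    have := lo_le_hi hκ.s1 hκ.s2 i
    have := lo_le_hi hκ'.s1 hκ'.s2 i
    simp only [pk] at h3; omega

lemma low_iff {M : ℕ} {l r κ : Sh} (h1 : Strip l κ) (h2 : Strip κ r) (hM : ∀ a, M ≤ a → r a = 0) (n : ℕ) :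
    Low (ff l r) M (∃ i, n < i ∧ l i < r (i+1)) (n+1) (pk l r κ) ↔
      (∃ i, n < i ∧ l i < tog l κ r i) ∧ (∃ i, n < i ∧ l i < κ i) := by
  have hb := fun i => lo_le_hi h1 h2 i
  have ht := fun i => tog_add h1 h2 i
  have hh : ∀ i, hi l r i ≤ r i := by
    intro i; rcases i with _ | k <;> simp only [hi] <;> omega
  unfold Low
  rw [sm_pos, sm_lt (by intro i; have := hb i; simp only [pk, ff]; omega)]
  simp only [pk, ff]
  have hM' : ∀ i, M ≤ i → hi l r i = 0 := fun i hi => by have := hh i; have := hM i hi; omega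
  constructor
  · rintro (⟨i, x, y⟩ | ⟨⟨i, x, y, z⟩, i', x', y', z'⟩)
    · have := hb i; have := ht i; have := h1 i
      simp only [lo] at *
      exact ⟨⟨i, x, by omega⟩, ⟨i, x, by omega⟩⟩
    · have := hb i; have := ht i; have := hb i'
      simp only [lo] at *
      exact ⟨⟨i, by omega, by omega⟩, ⟨i', by omega, by omega⟩⟩
  · rintro ⟨⟨i, x, y⟩, ⟨i', x', y'⟩⟩
    by_cases c1 : l i < r (i+1)
    · exact Or.inl ⟨i, x, c1⟩
    by_cases c2 : l i' < r (i'+1)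
    · exact Or.inl ⟨i', x', c2⟩
    right
    have e1 := hb i; have e2 := ht i; have e3 := hb i'
    refine ⟨⟨i, by omega, ?_, ?_⟩, i', by omega, ?_, ?_⟩
    · by_contra hc
      have := hM' i (by omega); omega
    · simp only [lo] at e1 e2; omega
    · by_contra hc
      have := hM' i' (by omega); omega
    · simp only [lo] at e3 ⊢; omega

lemma ad_or {l r κ : Sh} (h1 : Strip l κ) (h2 : Strip κ r) (n : ℕ) :
    ((∃ i, n < i ∧ l i < κ i) ∨ (∃ i, n < i ∧ l i < tog l κ r i)) ↔ ∃ i, n < i ∧ l i < hi l r i := by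
  have hb := fun i => lo_le_hi h1 h2 i
  have ht := fun i => tog_add h1 h2 i
  constructor
  · rintro (⟨i, x, y⟩ | ⟨i, x, y⟩)
    · have := hb i; exact ⟨i, x, by omega⟩
    · have := hb i; have := ht i; exact ⟨i, x, by omega⟩
  · rintro ⟨i, x, y⟩
    have := hb i; have := ht i
    by_cases hc : l i < κ i
    · exact Or.inl ⟨i, x, hc⟩
    · right; refine ⟨i, x, ?_⟩
      have := h1 i; simp only [lo] at *; omega

lemma ex_lt {M : ℕ} {l m : Sh} (h : sz M l < sz M m) : ∃ i, l i < m i := by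
  unfold sz at h
  obtain ⟨i, _, hi⟩ := Finset.exists_lt_of_sum_lt h
  exact ⟨i, hi⟩

lemma des_inf {l m r : Sh} (h : ∃ i, l i < m i) :
    Des l m r ↔ ∃ i, sInf {i | l i < m i} < i ∧ m i < r i := by
  constructor
  · rintro ⟨i, i', x, y, z⟩
    exact ⟨i', lt_of_le_of_lt (Nat.sInf_le y) x, z⟩
  · rintro ⟨i, x, y⟩
    exact ⟨_, i, x, Nat.sInf_mem (s := {i | l i < m i}) h, y⟩

/-- common part of the core decomposition -/
structure CC (M : ℕ) (W : List ℕ) (q p : ℕ) (ρ : Sh) (E L : Sh → Prop) (C : List Sh) (κ : Sh) : Prop where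
  ok : Ok M W C
  ss : SS M (hd C) ρ E L q p κ
  sup : ∀ a, M ≤ a → ρ a = 0
  d : Des (hd C.tail) (hd C) κ
  a : Des (hd (Dn C)) (hd C) (tog (hd C) κ ρ)

lemma Up_cons (ρ κ : Sh) {C : List Sh} (h : 1 ≤ C.length) :
    Up ρ (κ :: C) = ρ :: Up (tog (hd C) κ ρ) C := by
  match C, h with
  | n :: C, _ => rfl

lemma hd_Up (ρ : Sh) (C : List Sh) : hd (Up ρ C) = ρ := by
  match C with
  | [] => rfl
  | [_] => rfl
  | _ :: _ :: _ => rfl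

lemma core_enc {M W q p ρ E L C κ} (hW : W ≠ []) (h : CC M W q p ρ E L C κ) :
    PP M (q :: (W ++ [p])) ρ E L (Up ρ (κ :: C)) := by
  have hW' : 1 ≤ W.length := List.length_pos_iff.2 hW
  have hl := h.ok.len
  have hsc : Sc (κ :: C) := (Sc_cons κ (by omega)).2 ⟨h.ss.s1, h.ok.sc⟩
  obtain ⟨a, b, c, d⟩ := Up_spec (κ :: C) ρ hsc h.ss.s2
  refine ⟨?_, c, ?_, ?_⟩
  · have : q :: (W ++ [p]) = (q :: W) ++ [p] := rfl
    rw [this, Ok_snoc (by simp), b, c, Ok_cons hW]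
    refine ⟨a, by simp [d, hl], ⟨h.ss.s1, h.ss.z1, h.ok, h.d, sup_strip h.ss.s2 h.sup⟩, h.ss.z2, ?_, h.sup⟩
    exact (des_col κ ρ (by omega) hsc h.ss.s2).2 h.a
  · rw [b]; exact h.ss.e
  · rw [Up_cons _ _ (by omega), List.tail_cons, hd_Up]; exact h.ss.l

lemma core_dec {M W q p ρ E L l} (hW : W ≠ []) (h : PP M (q :: (W ++ [p])) ρ E L l) :
    ∃ C κ, Dn l = κ :: C ∧ l = Up ρ (κ :: C) ∧ CC M W q p ρ E L C κ := by
  obtain ⟨h1, h2, h3, h4⟩ := h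
  have hW' : 1 ≤ W.length := List.length_pos_iff.2 hW
  have hl := h1.len
  have : q :: (W ++ [p]) = (q :: W) ++ [p] := rfl
  rw [this, Ok_snoc (by simp)] at h1
  obtain ⟨a, b, c, d, e, f⟩ := h1
  simp at b
  obtain ⟨x1, x2, x3⟩ := Sc_Dn l a (by omega)
  have hU := Up_Dn l a (by omega)
  obtain ⟨κ, C, hC⟩ : ∃ κ C, Dn l = κ :: C := by
    rcases hD : Dn l with _ | ⟨x, t⟩
    · simp [hD] at x3; omega
    · exact ⟨x, t, rfl⟩
  rw [hC] at c d e x1 x2 x3 hU h3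
  have hl : C.length = W.length + 1 := by simp at x3; omega
  rw [h2] at hU d e f x2
  refine ⟨C, κ, hC, hU.symm, ?_⟩
  obtain ⟨c1, c2, c3, c4, c5⟩ := (Ok_cons hW).1 c
  refine ⟨c3, ⟨c1, x2, c2, d, h3, ?_⟩, f, c4, ?_⟩
  · rw [← hU, Up_cons _ _ (by omega), List.tail_cons, hd_Up] at h4; exact h4
  · exact (des_col κ ρ (by omega) x1 x2).1 e

lemma Up_inj {M W q p ρ E L C κ W' q' p' C' κ'} (h : CC M W q p ρ E L C κ) (h' : CC M W' q' p' ρ E L C' κ')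
    (e : Up ρ (κ :: C) = Up ρ (κ' :: C')) : C = C' ∧ κ = κ' := by
  have hl := h.ok.len
  have hl' := h'.ok.len
  have e1 := (Up_spec (κ :: C) ρ ((Sc_cons κ (by omega)).2 ⟨h.ss.s1, h.ok.sc⟩) h.ss.s2).2.1
  have e2 := (Up_spec (κ' :: C') ρ ((Sc_cons κ' (by omega)).2 ⟨h'.ss.s1, h'.ok.sc⟩) h'.ss.s2).2.1
  rw [e, e2] at e1
  simp at e1
  exact ⟨e1.2.symm, e1.1.symm⟩

lemma Ok_pos {M W C} (hW : W ≠ []) (hpos : ∀ x ∈ W, 0 < x) (h : Ok M W C) :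
    (∃ i, hd (Dn C) i < hd C i) ∧ (∃ i, hd C.tail i < hd C i) := by
  have hl := h.len
  constructor
  · obtain ⟨W', x, rfl⟩ : ∃ W' x, W = W' ++ [x] := ⟨W.dropLast, W.getLast hW, (List.dropLast_append_getLast hW).symm⟩
    have := (Rows_snoc W' C h.sc (by simpa using hl) h.sup).1 h.rows
    have hx := hpos x (by simp)
    exact ex_lt (M := M) (by omega)
  · match W, C, hW, h with
    | y :: W, r :: C, _, h =>
      have := h.rows.1
      have hx := hpos y (by simp)
      exact ex_lt (M := M) (m := r) (show sz M (hd C) < sz M r by omega)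

lemma Stmt_core1 {M W q p} (hW : W ≠ []) (hpos : ∀ x ∈ W, 0 < x) (hpal : W.reverse = W) (hpq : q + 2 ≤ p) :
    Stmt M (q :: (W ++ [p])) ((q+1) :: (W ++ [p-1])) := by
  intro ρ E L hE hL
  by_cases hsup : ∀ a, M ≤ a → ρ a = 0
  swap
  · refine ⟨id, ?_, ?_⟩
    · intro l hl; exact (hsup (by have := hl.ok.sup; rwa [hl.hd] at this)).elim
    · intro l l' _ _ e; exact e
  obtain ⟨k, hk⟩ : ∃ k, W.length = k + 1 := ⟨W.length - 1, by have := List.length_pos_iff.2 hW; omega⟩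
  have main : ∀ lam : Sh, ∃ F : List Sh × Sh → List Sh × Sh,
      (∀ C κ, hd C = lam → CC M W q p ρ E L C κ → hd (F (C, κ)).1 = lam ∧
        CC M W (q+1) (p-1) ρ E L (F (C, κ)).1 (F (C, κ)).2) ∧
      ∀ C κ C' κ', hd C = lam → hd C' = lam → CC M W q p ρ E L C κ → CC M W q p ρ E L C' κ' →
        F (C, κ) = F (C', κ') → C = C' ∧ κ = κ' := by
    intro lam
    let A : ℕ → Sh → Prop := fun n κ => ∃ i, n < i ∧ lam i < tog lam κ ρ i
    let D : ℕ → Sh → Prop := fun n κ => ∃ i, n < i ∧ lam i < κ i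
    let a : List Sh → ℕ := fun C => sInf {i | hd (Dn C) i < hd C i}
    let b : List Sh → ℕ := fun C => sInf {i | hd C.tail i < hd C i}
    let Γs : Set (List Sh) := {C | Ok M W C ∧ hd C = lam}
    have hop : ∀ n, ∃ op : Sh → Sh, (∀ κ, SS M lam ρ E L q p κ → A n κ → D n κ →
        SS M lam ρ E L (q+1) (p-1) (op κ) ∧ A n (op κ) ∧ D n (op κ)) ∧
        ∀ κ κ', SS M lam ρ E L q p κ → SS M lam ρ E L q p κ' → A n κ → D n κ → A n κ' → D n κ' →
          op κ = op κ' → κ = κ' := by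
      intro n
      by_cases hn : n + 1 ≤ M
      · obtain ⟨op, h1, h2⟩ := kop (l := lam) hsup E L q p hpq (∃ i, n < i ∧ lam i < ρ (i+1)) (n+1) hn
        refine ⟨op, ?_, ?_⟩
        · intro κ hκ x y
          obtain ⟨u, v⟩ := h1 κ hκ ((low_iff hκ.s1 hκ.s2 hsup n).2 ⟨x, y⟩)
          exact ⟨u, (low_iff u.s1 u.s2 hsup n).1 v⟩
        · intro κ κ' hκ hκ' x y x' y' e
          exact h2 κ κ' hκ ((low_iff hκ.s1 hκ.s2 hsup n).2 ⟨x, y⟩) hκ'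
            ((low_iff hκ'.s1 hκ'.s2 hsup n).2 ⟨x', y'⟩) e
      · have no : ∀ κ, SS M lam ρ E L q p κ → ¬ D n κ := by
          rintro κ hκ ⟨i, x, y⟩
          have := sup_strip hκ.s2 hsup i (by omega); omega
        exact ⟨id, fun κ hκ _ y => (no κ hκ y).elim, fun κ κ' hκ _ _ y => (no κ hκ y).elim⟩
    choose op hop1 hop2 using hop
    have hstΓ : ∀ C ∈ Γs, evn W.length C ∈ Γs := by
      rintro C ⟨h1, h2⟩
      refine ⟨?_, by rw [(evn_len _ _ h1.sc h1.len).2.1, h2]⟩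
      have := Ok_rev W C h1
      rwa [hpal] at this
    obtain ⟨F, hF1, hF2⟩ := halve Γs (evn W.length) hstΓ
      (fun C hC => evn_evn _ _ hC.1.sc hC.1.len) a b
      (by
        intro C hC
        have h1 := hC.1.len
        simp only [a, b]
        rw [hk, hd_Dn_evn hC.1.sc (by omega), (evn_len _ _ hC.1.sc (by omega)).2.1])
      (by
        intro C hC
        have h1 := hC.1.len
        simp only [a, b]
        rw [hk, hd_tail_evn hC.1.sc (by omega), (evn_len _ _ hC.1.sc (by omega)).2.1])
      A D {κ | SS M lam ρ E L q p κ} {κ | SS M lam ρ E L (q+1) (p-1) κ}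
      (by rintro m n κ hmn ⟨i, x, y⟩; exact ⟨i, by omega, y⟩)
      (by rintro m n κ hmn ⟨i, x, y⟩; exact ⟨i, by omega, y⟩)
      (by
        intro n κ hκ h κ' hκ'
        rw [ad_or hκ'.s1 hκ'.s2]
        exact (ad_or hκ.s1 hκ.s2 n).1 h)
      op
      (fun m κ hκ x y => hop1 m κ hκ x y)
      (fun m κ hκ κ' hκ' x y x' y' e => hop2 m κ κ' hκ hκ' x y x' y' e)
    have conv : ∀ {q p C κ}, hd C = lam → CC M W q p ρ E L C κ →
        C ∈ Γs ∧ SS M lam ρ E L q p κ ∧ A (a C) κ ∧ D (b C) κ := by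
      intro q p C κ h1 h2
      have h3 := Ok_pos hW hpos h2.ok
      have h4 := (des_inf h3.1).1 h2.a
      have h5 := (des_inf h3.2).1 h2.d
      refine ⟨⟨h2.ok, h1⟩, ?_, ?_, ?_⟩
      · rw [← h1]; exact h2.ss
      · simp only [A, a, ← h1]; exact h4
      · simp only [D, b, ← h1]; exact h5
    have conv2 : ∀ {q p C κ}, C ∈ Γs → SS M lam ρ E L q p κ → A (a C) κ → D (b C) κ →
        hd C = lam ∧ CC M W q p ρ E L C κ := by
      rintro q p C κ ⟨h1, h2⟩ h3 h4 h5
      have h6 := Ok_pos hW hpos h1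
      subst h2
      exact ⟨rfl, ⟨h1, h3, hsup, (des_inf h6.2).2 h5, (des_inf h6.1).2 h4⟩⟩
    refine ⟨F, ?_, ?_⟩
    · intro C κ h1 h2
      obtain ⟨x, y, z, w⟩ := conv h1 h2
      obtain ⟨x, y, z, w⟩ := hF1 C x κ y z w
      exact conv2 x y z w
    · intro C κ C' κ' h1 h1' h2 h2' e
      obtain ⟨x, y, z, w⟩ := conv h1 h2
      obtain ⟨x', y', z', w'⟩ := conv h1' h2'
      exact hF2 C x κ y z w C' x' κ' y' z' w' e
  choose F hF1 hF2 using main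
  refine ⟨fun l => Up ρ ((F (hd (Dn l).tail) ((Dn l).tail, hd (Dn l))).2 ::
    (F (hd (Dn l).tail) ((Dn l).tail, hd (Dn l))).1), ?_, ?_⟩
  · intro l hl
    obtain ⟨C, κ, h1, h2, h3⟩ := core_dec hW hl
    beta_reduce
    rw [h1]
    exact core_enc hW (hF1 _ C κ rfl h3).2
  · intro l l' hl hl' e
    obtain ⟨C, κ, h1, h2, h3⟩ := core_dec hW hl
    obtain ⟨C', κ', h1', h2', h3'⟩ := core_dec hW hl'
    simp only [h1, h1', List.tail_cons, hd_cons] at e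
    have k1 := hF1 _ C κ rfl h3
    have k1' := hF1 _ C' κ' rfl h3'
    obtain ⟨e1, e2⟩ := Up_inj k1.2 k1'.2 e
    have hh : hd C = hd C' := by rw [← k1.1, ← k1'.1, e1]
    obtain ⟨u, v⟩ := hF2 (hd C) C κ C' κ' rfl hh.symm h3 h3' (by
      rw [hh] at e1 e2 ⊢
      exact Prod.ext e1 e2)
    rw [h2, h2', u, v]

lemma PP_two {M q p ρ l} {E L : Sh → Prop} : PP M [q, p] ρ E L l ↔ ∃ κ, l = [ρ, tog (fun _ => 0) κ ρ, fun _ => 0] ∧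
    SS M (fun _ => 0) ρ E L q p κ ∧ (∀ a, M ≤ a → ρ a = 0) ∧ 0 < ρ 1 := by
  have z0 : sz M (fun _ => 0) = 0 := by simp [sz]
  constructor
  · rintro ⟨⟨h1, h2, h3, h4⟩, h5, h6, h7⟩
    have hl := Rows_len h2
    match l, hl with
    | [r, m, z], _ =>
      have h5 : r = ρ := h5
      subst h5
      obtain ⟨h1, h1', h1''⟩ := h1
      have h1'' : z = fun _ => 0 := h1''
      subst h1''
      obtain ⟨r1, r2, _⟩ := h2
      have ht := sz_tog h1' h1 h4
      simp only [hd_cons] at r1 r2 h4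
      refine ⟨tog (fun _ => 0) m r, by rw [tog_tog h1' h1], ⟨strip_tog1 h1' h1, strip_tog2 h1' h1,
        by omega, by omega, h6, ?_⟩, h4, (des_base h1' h1).1 h3.1⟩
      rw [tog_tog h1' h1]; exact h7
  · rintro ⟨κ, rfl, h2, h3, h4⟩
    have ht := sz_tog h2.s1 h2.s2 h3
    have := h2.z1; have := h2.z2
    refine ⟨⟨⟨strip_tog2 h2.s1 h2.s2, strip_tog1 h2.s1 h2.s2, rfl⟩,
      ⟨by simp only [hd_cons]; omega, by simp only [hd_cons]; omega, trivial⟩,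
      ⟨(des_base (strip_tog1 h2.s1 h2.s2) (strip_tog2 h2.s1 h2.s2)).2 h4, trivial⟩, h3⟩, rfl, ?_, h2.l⟩
    have : hd (Dn [ρ, tog (fun _ => 0) κ ρ, fun _ => 0]) = κ := tog_tog h2.s1 h2.s2
    rw [this]; exact h2.e

lemma Stmt_core0 {M q p} (hpq : q + 2 ≤ p) : Stmt M [q, p] [q+1, p-1] := by
  intro ρ E L hE hL
  by_cases hsup : ∀ a, M ≤ a → ρ a = 0
  swap
  · refine ⟨id, ?_, ?_⟩
    · intro l hl; exact (hsup (by have := hl.ok.sup; rwa [hl.hd] at this)).elim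
    · intro l l' _ _ e; exact e
  obtain ⟨op, h1, h2⟩ := kop (l := fun _ => 0) hsup E L q p hpq True 0 (by omega)
  refine ⟨fun l => [ρ, tog (fun _ => 0) (op (tog (fun _ => 0) (hd l.tail) ρ)) ρ, fun _ => 0], ?_, ?_⟩
  · intro l hl
    obtain ⟨κ, rfl, x, y, z⟩ := PP_two.1 hl
    refine PP_two.2 ⟨_, rfl, ?_, y, z⟩
    simp only [List.tail_cons, hd_cons]
    rw [tog_tog x.s1 x.s2]
    exact (h1 κ x (Or.inl trivial)).1
  · intro l l' hl hl' e
    obtain ⟨κ, rfl, x, y, z⟩ := PP_two.1 hl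
    obtain ⟨κ', rfl, x', y', z'⟩ := PP_two.1 hl'
    have t1 := (h1 κ x (Or.inl trivial)).1
    have t2 := (h1 κ' x' (Or.inl trivial)).1
    simp only [List.tail_cons, hd_cons, tog_tog x.s1 x.s2, tog_tog x'.s1 x'.s2, List.cons.injEq, and_true, true_and] at e
    have e2 := congrArg (fun s => tog (fun _ => 0) s ρ) e
    simp only [tog_tog t1.s1 t1.s2, tog_tog t2.s1 t2.s2] at e2
    rw [h2 κ κ' x (Or.inl trivial) x' (Or.inl trivial) e2]

lemma Stmt_core {M W q p} (hpos : ∀ x ∈ W, 0 < x) (hpal : W.reverse = W) (hpq : q + 2 ≤ p) :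
    Stmt M (q :: (W ++ [p])) ((q+1) :: (W ++ [p-1])) := by
  by_cases hW : W = []
  · subst hW; exact Stmt_core0 hpq
  · exact Stmt_core1 hW hpos hpal hpq

end Rib

namespace Rib
open Finset

lemma select : ∀ (n : ℕ) (W : List ℕ), W.length = n → ∀ (Y X : List ℕ) (u v : ℕ), (u + 2 ≤ v ∨ v + 2 ≤ u) →
    ∃ (Y' W' X' : List ℕ) (u' v' : ℕ), Y ++ u :: (W ++ v :: X) = Y' ++ u' :: (W' ++ v' :: X') ∧
      (u' + 2 ≤ v' ∨ v' + 2 ≤ u') ∧ W'.reverse = W' := by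
  intro n
  induction n using Nat.strong_induction_on with
  | _ n ih =>
    intro W hW Y X u v huv
    by_cases h1 : ∃ w ∈ W, u + 2 ≤ w ∨ w + 2 ≤ u
    · obtain ⟨w, hw, hd⟩ := h1
      obtain ⟨s, t, rfl⟩ := List.append_of_mem hw
      obtain ⟨Y', W', X', u', v', e, r⟩ := ih s.length (by simp at hW; omega) s rfl Y (t ++ v :: X) u w hd
      exact ⟨Y', W', X', u', v', by rw [← e]; simp, r⟩
    by_cases h2 : ∃ w ∈ W, w + 2 ≤ v ∨ v + 2 ≤ w
    · obtain ⟨w, hw, hd⟩ := h2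
      obtain ⟨s, t, rfl⟩ := List.append_of_mem hw
      obtain ⟨Y', W', X', u', v', e, r⟩ := ih t.length (by simp at hW; omega) t rfl (Y ++ u :: s) X w v hd
      exact ⟨Y', W', X', u', v', by rw [← e]; simp, r⟩
    push Not at h1 h2
    refine ⟨Y, W, X, u, v, rfl, huv, ?_⟩
    have : W = List.replicate n (min u v + 1) := by
      rw [List.eq_replicate_iff]
      refine ⟨hW, ?_⟩
      intro b hb
      have := h1 b hb; have := h2 b hb; omega
    rw [this, List.reverse_replicate]

def Gs (t : ℕ) (α : List ℕ) : ℕ := (α.map (fun x => x - t)).sum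

lemma move {α : List ℕ} (hpos : ∀ x ∈ α, 0 < x) (h : ∃ u ∈ α, ∃ v ∈ α, u + 2 ≤ v) :
    ∃ β : List ℕ, (∀ x ∈ β, 0 < x) ∧ β.sum = α.sum ∧ β.length = α.length ∧ (∀ M, Stmt M α β) ∧
      ∃ t, Gs t β < Gs t α := by
  have h0 : ∃ (Y W X : List ℕ) (u v : ℕ), α = Y ++ u :: (W ++ v :: X) ∧ (u + 2 ≤ v ∨ v + 2 ≤ u) := by
    obtain ⟨u, hu, v, hv, huv⟩ := h
    obtain ⟨s, t, rfl⟩ := List.append_of_mem hu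
    have : v ∈ s ∨ v ∈ t := by
      simp at hv; rcases hv with hv | hv | hv
      · exact Or.inl hv
      · omega
      · exact Or.inr hv
    rcases this with hv | hv
    · obtain ⟨s1, s2, rfl⟩ := List.append_of_mem hv
      exact ⟨s1, s2, t, v, u, by simp, Or.inr huv⟩
    · obtain ⟨s1, s2, rfl⟩ := List.append_of_mem hv
      exact ⟨s, s1, s2, u, v, by simp, Or.inl huv⟩
  obtain ⟨Y, W, X, u, v, rfl, huv⟩ := h0
  obtain ⟨Y, W, X, u, v, e, huv, hp⟩ := select _ W rfl Y X u v huv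
  rw [e] at hpos ⊢
  have hW : ∀ x ∈ W, 0 < x := fun x hx => hpos x (by simp [hx])
  have hX : ∀ x ∈ X, 0 < x := fun x hx => hpos x (by simp [hx])
  have hY : ∀ x ∈ Y, 0 < x := fun x hx => hpos x (by simp [hx])
  have hu := hpos u (by simp)
  have hv := hpos v (by simp)
  rcases huv with huv | huv
  · refine ⟨Y ++ (u+1) :: (W ++ (v-1) :: X), ?_, ?_, ?_, ?_, v - 1, ?_⟩
    · intro x hx; simp at hx
      rcases hx with hx | hx | hx | hx | hx
      · exact hY x hx
      · omega
      · exact hW x hx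
      · omega
      · exact hX x hx
    · simp; omega
    · simp
    · intro M
      have := Stmt_pre (by simp) (by simp) (Stmt_post (by simp) (by simp) (Stmt_core (M := M) hW hp huv) X) Y
      simpa using this
    · simp [Gs]; omega
  · refine ⟨Y ++ (u-1) :: (W ++ (v+1) :: X), ?_, ?_, ?_, ?_, u - 1, ?_⟩
    · intro x hx; simp at hx
      rcases hx with hx | hx | hx | hx | hx
      · exact hY x hx
      · omega
      · exact hW x hx
      · omega
      · exact hX x hx
    · simp; omega
    · simp
    · intro M
      have h1 := Stmt_rev (by simp) (by simp) (Stmt_core (M := M) hW hp huv)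
      simp [hp] at h1
      have := Stmt_pre (by simp) (by simp) (Stmt_post (by simp) (by simp) h1 X) Y
      simpa using this
    · simp [Gs]; omega

lemma tele {ρ r : Sh} (h : Strip ρ r) (k n : ℕ) :
    sz (k+1+n) r + sz k ρ ≤ sz (k+1) r + sz (k+n) ρ := by
  induction n with
  | zero => simp
  | succ n ih =>
    have e1 : sz (k+1+(n+1)) r = sz (k+1+n) r + r (k+1+n) := sum_range_succ _ _
    have e2 : sz (k+(n+1)) ρ = sz (k+n) ρ + ρ (k+n) := sum_range_succ _ _
    have := (h (k+n)).2
    have e3 : k + n + 1 = k+1+n := by omega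
    rw [e3] at this
    omega

lemma sz_ext {M K : ℕ} {r : Sh} (h : ∀ a, M ≤ a → r a = 0) (hK : M ≤ K) : sz K r = sz M r := by
  unfold sz
  symm
  apply Finset.sum_subset (by simpa using hK)
  intro x _ hx; exact h x (by simpa using hx)

lemma lower {M t : ℕ} : ∀ (α : List ℕ) (l : List Sh), Sc l → Rows M α l → (∀ a, M ≤ a → hd l a = 0) →
    (α.filter (t < ·)).length * t + Gs t α ≤ sz (α.filter (t < ·)).length (hd l)
  | [], l, _, _, _ => by simp [Gs]
  | y :: α, r :: l, h, h', h'' => by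
    have hl := Rows_len h'.2
    obtain ⟨h1, h2⟩ := (Sc_cons r (by omega)).1 h
    have h3 := sup_strip h1 h''
    have ih := lower (t := t) α l h2 h'.2 h3
    have hr := h'.1
    simp only [hd_cons] at h'' ⊢
    by_cases hy : t < y
    · simp only [hy, decide_true, List.filter_cons_of_pos, List.length_cons]
      have := tele h1 (α.filter (t < ·)).length M
      rw [sz_ext (K := (α.filter (t < ·)).length + 1 + M) h'' (by omega),
        sz_ext (K := (α.filter (t < ·)).length + M) h3 (by omega)] at this
      have e : Gs t (y :: α) = (y - t) + Gs t α := by simp [Gs]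
      rw [e, add_mul]; omega
    · simp only [hy, decide_false, Bool.false_eq_true, not_false_eq_true, List.filter_cons_of_neg]
      have e : Gs t (y :: α) = (y - t) + Gs t α := by simp [Gs]
      have : sz (α.filter (t < ·)).length (hd l) ≤ sz (α.filter (t < ·)).length r :=
        sum_le_sum fun a _ => (h1 a).1
      omega

def ins (y : ℕ) (ρ : Sh) : Sh
  | 0 => max (ρ 0) y
  | a+1 => max (ρ (a+1)) (min y (ρ a))

def key : List ℕ → Sh
  | [] => fun _ => 0
  | y :: β => ins y (key β)

def kc : List ℕ → List Sh
  | [] => [fun _ => 0]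
  | y :: β => key (y :: β) :: kc β

lemma hd_kc (β) : hd (kc β) = key β := by cases β <;> rfl

lemma key_anti : ∀ (β : List ℕ) (a : ℕ), key β (a+1) ≤ key β a
  | [], a => by simp [key]
  | y :: β, 0 => by have := key_anti β 0; simp only [key, ins]; omega
  | y :: β, a+1 => by
    have := key_anti β (a+1); have := key_anti β a; simp only [key, ins]; omega

lemma key_strip (y : ℕ) (β : List ℕ) : Strip (key β) (key (y :: β)) := by
  intro a
  have := key_anti β a
  rcases a with _ | a
  · simp only [key, ins]; omega
  · simp only [key, ins]; omega

lemma key_sup : ∀ (β : List ℕ) (a : ℕ), β.length ≤ a → key β a = 0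
  | [], a, _ => rfl
  | y :: β, 0, h => by simp at h
  | y :: β, a+1, h => by
    have := key_sup β (a+1) (by simp at h; omega); have := key_sup β a (by simp at h; omega)
    simp only [key, ins]; omega

lemma key_pos : ∀ (β : List ℕ) (_ : ∀ x ∈ β, 0 < x) (a : ℕ), a < β.length → 0 < key β a
  | [], _, a, h => by simp at h
  | y :: β, hp, 0, h => by have := hp y (by simp); simp only [key, ins]; omega
  | y :: β, hp, a+1, h => by
    have := hp y (by simp)
    have := key_pos β (fun x hx => hp x (by simp [hx])) a (by simp at h; omega)
    simp only [key, ins]; omega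

lemma key_sum (y : ℕ) (β : List ℕ) (k : ℕ) : sz (k+1) (key (y :: β)) = sz k (key β) + max (key β k) y := by
  induction k with
  | zero => simp [sz, key, ins]
  | succ k ih =>
    have e1 : sz (k+1+1) (key (y :: β)) = sz (k+1) (key (y :: β)) + key (y :: β) (k+1) := sum_range_succ _ _
    have e2 : sz (k+1) (key β) = sz k (key β) + key β k := sum_range_succ _ _
    have := key_anti β k
    rw [e1, ih, e2]
    simp only [key, ins]; omega

lemma key_bd (t : ℕ) : ∀ (β : List ℕ) (k : ℕ), sz k (key β) ≤ k * t + Gs t β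
  | [], k => by simp [sz, key]
  | y :: β, 0 => by simp [sz]
  | y :: β, k+1 => by
    rw [key_sum]
    have h1 := key_bd t β k
    have h2 := key_bd t β (k+1)
    have e2 : sz (k+1) (key β) = sz k (key β) + key β k := sum_range_succ _ _
    have e : Gs t (y :: β) = (y - t) + Gs t β := by simp [Gs]
    rw [add_mul] at *
    omega

lemma key_sc : ∀ β, Sc (kc β)
  | [] => rfl
  | y :: β => by
    have : 1 ≤ (kc β).length := by cases β <;> simp [kc]
    exact (Sc_cons _ this).2 ⟨by rw [hd_kc]; exact key_strip y β, key_sc β⟩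

lemma key_rows {M : ℕ} : ∀ β : List ℕ, β.length ≤ M → Rows M β (kc β)
  | [], _ => trivial
  | y :: β, h => by
    simp at h
    refine ⟨?_, key_rows β (by omega)⟩
    obtain ⟨K, rfl⟩ : ∃ K, M = K + 1 := ⟨M - 1, by omega⟩
    rw [hd_kc, key_sum, key_sup β K (by omega)]
    have e2 : sz (K+1) (key β) = sz K (key β) + key β K := sum_range_succ _ _
    rw [e2, key_sup β K (by omega)]; simp

lemma key_des : ∀ β : List ℕ, (∀ x ∈ β, 0 < x) → AllDes (kc β)
  | [], _ => trivial
  | [y], _ => trivial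
  | y :: x :: β, hp => by
    have ih := key_des (x :: β) (fun z hz => hp z (by simp [hz]))
    have h2 : 2 ≤ (kc (x :: β)).length := by cases β <;> simp [kc]
    rw [kc, AllDes_cons _ h2]
    refine ⟨?_, ih⟩
    rw [hd_kc]
    have : hd (kc (x :: β)).tail = key β := hd_kc β
    rw [this]
    refine ⟨β.length, β.length + 1, by omega, ?_, ?_⟩
    · rw [key_sup β _ le_rfl]; exact key_pos _ (fun z hz => hp z (by simp [hz])) _ (by simp)
    · rw [key_sup (x :: β) _ (by simp)]; exact key_pos _ hp _ (by simp)

theorem row_move {α : List ℕ} (hpos : ∀ x ∈ α, 0 < x) (h : ∃ u ∈ α, ∃ v ∈ α, u + 2 ≤ v) :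
    ∃ β : List ℕ, (∀ x ∈ β, 0 < x) ∧ β.sum = α.sum ∧
      (∀ M, ∃ F : List Sh → List Sh, (∀ l, Ok M α l → Ok M β (F l) ∧ hd (F l) = hd l) ∧
        ∀ l l', Ok M α l → Ok M α l' → F l = F l' → l = l') ∧
      (∀ M, β.sum ≤ M → ∃ l, Ok M β l ∧ ∀ l', Ok M α l' → hd l' ≠ hd l) := by
  obtain ⟨β, h1, h2, h3, h4, t, h5⟩ := move hpos h
  refine ⟨β, h1, h2, ?_, ?_⟩
  · intro M
    have h4 := h4 M
    have : ∀ ρ, Inj (PP M α ρ (fun _ => False) (fun _ => False)) (PP M β ρ (fun _ => False) (fun _ => False)) :=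
      fun ρ => h4 ρ _ _ (fun _ h => h.elim) (fun _ h => h.elim)
    choose F hF1 hF2 using this
    refine ⟨fun l => F (hd l) l, ?_, ?_⟩
    · intro l hl
      have := hF1 (hd l) l ⟨hl, rfl, fun _ h => h.elim, fun _ h => h.elim⟩
      exact ⟨this.ok, this.hd⟩
    · intro l l' hl hl' e
      have k := hF1 (hd l) l ⟨hl, rfl, fun _ h => h.elim, fun _ h => h.elim⟩
      have k' := hF1 (hd l') l' ⟨hl', rfl, fun _ h => h.elim, fun _ h => h.elim⟩
      have hh : hd l = hd l' := by rw [← k.hd, ← k'.hd]; exact congrArg hd e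
      refine hF2 (hd l) l l' ⟨hl, rfl, fun _ h => h.elim, fun _ h => h.elim⟩
        ⟨hl', hh.symm, fun _ h => h.elim, fun _ h => h.elim⟩ ?_
      beta_reduce at e
      rw [e, hh]
  · intro M hM
    have hlen : ∀ β : List ℕ, (∀ x ∈ β, 0 < x) → β.length ≤ β.sum := by
      intro β
      induction β with
      | nil => simp
      | cons x β ih =>
        intro hp
        have := ih (fun z hz => hp z (by simp [hz]))
        have := hp x (by simp)
        simp; omega
    have hl := hlen β h1
    refine ⟨kc β, ⟨key_sc β, key_rows β (by omega), key_des β h1, ?_⟩, ?_⟩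
    · intro a ha; rw [hd_kc]; exact key_sup β a (by omega)
    · intro l' hl' e
      have a1 := lower (t := t) α l' hl'.sc hl'.rows hl'.sup
      have a2 := key_bd t β (α.filter (t < ·)).length
      rw [e, hd_kc] at a1
      omega

end Rib

namespace Rib
open Finset

def cnt (w : ℕ → ℕ) (n : ℕ) : Sh := fun a => ((range n).filter (fun k => w k = a)).card

lemma cnt_zero (w) : cnt w 0 = fun _ => 0 := by funext a; simp [cnt]

lemma cnt_succ (w : ℕ → ℕ) (n a : ℕ) : cnt w (n+1) a = cnt w n a + if w n = a then 1 else 0 := by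
  simp only [cnt, range_add_one, filter_insert]
  split_ifs with h
  · rw [card_insert_of_notMem (by simp)]
  · rfl

lemma cnt_congr {w w' : ℕ → ℕ} {n : ℕ} (h : ∀ k < n, w k = w' k) : cnt w n = cnt w' n := by
  funext a; unfold cnt; congr 1; apply filter_congr; intro k hk; rw [h k (by simpa using hk)]

lemma cnt_mono (w : ℕ → ℕ) {m n : ℕ} (h : m ≤ n) (a : ℕ) : cnt w m a ≤ cnt w n a := by
  apply card_le_card; apply filter_subset_filter; simpa using h

def Lat (w : ℕ → ℕ) (n : ℕ) : Prop := ∀ a, cnt w n (a+1) ≤ cnt w n a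

def Dec (w : ℕ → ℕ) (s y : ℕ) : Prop := ∀ k k', s ≤ k → k ≤ k' → k' < s + y → w k' ≤ w k

lemma Dec_pred {w s y} (h : Dec w s (y+1)) : Dec w s y := fun k k' a b c => h k k' a b (by omega)

lemma cnt_occ {w : ℕ → ℕ} {s a : ℕ} : ∀ {y : ℕ}, cnt w s a < cnt w (s+y) a ↔ ∃ k, s ≤ k ∧ k < s + y ∧ w k = a := by
  intro y
  induction y with
  | zero => simp; intro k; omega
  | succ y ih =>
    have e := cnt_succ w (s+y) a
    have e2 := cnt_mono w (show s ≤ s + y by omega) a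
    rw [← add_assoc, e]
    split_ifs with h
    · exact ⟨fun _ => ⟨s+y, by omega, by omega, h⟩, fun _ => by omega⟩
    · rw [add_zero, ih]
      constructor
      · rintro ⟨k, x, y, z⟩; exact ⟨k, x, by omega, z⟩
      · rintro ⟨k, x, y', z⟩
        refine ⟨k, x, ?_, z⟩
        rcases Nat.lt_or_ge k (s+y) with h1 | h1
        · exact h1
        · have : k = s + y := by omega
          subst this; exact (h z).elim

lemma cnt_eq_of {w : ℕ → ℕ} {s y a : ℕ} (h : ∀ k, s ≤ k → k < s + y → w k ≠ a) : cnt w (s+y) a = cnt w s a := by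
  have h1 := cnt_mono w (show s ≤ s + y by omega) a
  have h2 : ¬ cnt w s a < cnt w (s+y) a := by
    rw [cnt_occ]; rintro ⟨k, x, y, z⟩; exact h k x y z
  omega

lemma row_strip {w : ℕ → ℕ} {s : ℕ} : ∀ {y : ℕ}, Dec w s y → (∀ n ≤ s + y, Lat w n) →
    Strip (cnt w s) (cnt w (s+y)) := by
  intro y
  induction y with
  | zero => intro _ h a; exact ⟨le_rfl, h s (by omega) a⟩
  | succ y ih =>
    intro h1 h2 a
    have ih := ih (Dec_pred h1) (fun n hn => h2 n (by omega)) a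
    refine ⟨cnt_mono w (by omega) a, ?_⟩
    have e := cnt_succ w (s+y) (a+1)
    rw [← add_assoc, e]
    split_ifs with h
    · have e3 : cnt w (s+(y+1)) a = cnt w s a := cnt_eq_of (by
        intro k hk hk' hw
        have := h1 k (s+y) hk (by omega) (by omega); omega)
      have := h2 (s+(y+1)) le_rfl a
      rw [e3, ← add_assoc, e, if_pos h] at this
      exact this
    · omega

lemma row_last {w : ℕ → ℕ} {s y : ℕ} (h : Dec w s (y+1)) :
    w (s+y) = sInf {a | cnt w s a < cnt w (s+(y+1)) a} := by
  apply le_antisymm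
  · have hne : {a | cnt w s a < cnt w (s+(y+1)) a}.Nonempty := ⟨w (s+y), cnt_occ.2 ⟨s+y, by omega, by omega, rfl⟩⟩
    obtain ⟨k, x, y', z⟩ := cnt_occ.1 (Nat.sInf_mem hne)
    rw [← z]; exact h k (s+y) x (by omega) (by omega)
  · exact Nat.sInf_le (cnt_occ.2 ⟨s+y, by omega, by omega, rfl⟩)

lemma row_inj {w w' : ℕ → ℕ} {s : ℕ} (h0 : cnt w s = cnt w' s) : ∀ {y : ℕ}, Dec w s y → Dec w' s y →
    cnt w (s+y) = cnt w' (s+y) → ∀ k, s ≤ k → k < s + y → w k = w' k := by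
  intro y
  induction y with
  | zero => intro _ _ _ k _ _; omega
  | succ y ih =>
    intro h1 h2 h3 k hk hk'
    have e : w (s+y) = w' (s+y) := by rw [row_last h1, row_last h2, h0, h3]
    rcases Nat.lt_or_ge k (s+y) with h | h
    · refine ih (Dec_pred h1) (Dec_pred h2) ?_ k hk h
      funext a
      have := congrFun h3 a
      rw [← add_assoc, cnt_succ, cnt_succ, e] at this
      omega
    · have : k = s + y := by omega
      subst this; exact e

lemma row_ex {w : ℕ → ℕ} {s M : ℕ} (hl : Lat w s) : ∀ {y : ℕ} {r : Sh}, Strip (cnt w s) r →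
    sz M r = sz M (cnt w s) + y → (∀ a, M ≤ a → r a = 0) →
    ∃ w', (∀ k < s, w' k = w k) ∧ Dec w' s y ∧ cnt w' (s+y) = r ∧ ∀ n, s ≤ n → n ≤ s + y → Lat w' n := by
  intro y
  induction y with
  | zero =>
    intro r h1 h2 h3
    refine ⟨w, fun _ _ => rfl, fun k k' a b c => by omega, ?_, fun n a b => by rwa [show n = s by omega]⟩
    funext a
    rcases Nat.lt_or_ge a M with h | h
    · have := (Finset.sum_eq_sum_iff_of_le (s := range M) (fun i _ => (h1 i).1)).1 h2.symm a (by simpa using h)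
      exact this
    · rw [h3 a h]; exact sup_strip h1 h3 a h
  | succ y ih =>
    intro r h1 h2 h3
    obtain ⟨b, hb, hmin⟩ : ∃ b, cnt w s b < r b ∧ ∀ a, cnt w s a < r a → b ≤ a := by
      have hne : {a | cnt w s a < r a}.Nonempty := ex_lt (M := M) (by omega)
      exact ⟨_, Nat.sInf_mem hne, fun a ha => Nat.sInf_le ha⟩
    have hbM : b < M := by
      by_contra hc; have := h3 b (by omega); omega
    let r' : Sh := fun a => r a - if a = b then 1 else 0
    have hr' : ∀ a, r a = r' a + if b = a then 1 else 0 := by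
      intro a; simp only [r']
      by_cases h : a = b
      · subst h; simp; omega
      · rw [if_neg h, if_neg (Ne.symm h)]; omega
    obtain ⟨w', e1, e2, e3, e4⟩ := ih (r := r') (by
        intro a
        refine ⟨?_, ?_⟩
        · have := h1 a; simp only [r']; split_ifs with h
          · subst h; omega
          · omega
        · have := h1 a; have := hr' (a+1); omega)
      (by
        have : sz M r = sz M r' + 1 := by
          unfold sz; rw [sum_congr rfl (fun a _ => hr' a), sum_add_distrib]
          simp [hbM]
        omega)
      (fun a ha => by have := h3 a ha; simp only [r']; omega)
    have hc : ∀ n ≤ s + y, cnt (Function.update w' (s+y) b) n = cnt w' n := by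
      intro n hn
      apply cnt_congr; intro k hk
      rw [Function.update_of_ne (by omega)]
    have hr : cnt (Function.update w' (s+y) b) (s+(y+1)) = r := by
      funext a
      rw [← add_assoc, cnt_succ, hc _ le_rfl, e3, Function.update_self, hr']
    refine ⟨Function.update w' (s+y) b, ?_, ?_, hr, ?_⟩
    · intro k hk; rw [Function.update_of_ne (by omega), e1 k hk]
    · intro k k' hk hkk hk'
      rcases Nat.lt_or_ge k' (s+y) with h | h
      · rw [Function.update_of_ne (by omega), Function.update_of_ne (by omega)]
        exact e2 k k' hk hkk h
      · have : k' = s + y := by omega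
        subst this
        rw [Function.update_self]
        rcases Nat.lt_or_ge k (s+y) with h | h
        · rw [Function.update_of_ne (by omega)]
          apply hmin
          have : cnt w' s (w' k) < cnt w' (s+y) (w' k) := cnt_occ.2 ⟨k, hk, h, rfl⟩
          rw [e3, cnt_congr e1] at this
          have := hr' (w' k); omega
        · have : k = s + y := by omega
          subst this; rw [Function.update_self]
    · intro n hn hn'
      rcases Nat.lt_or_ge (s+y) n with h | h
      · have : n = s + (y+1) := by omega
        rw [this]; intro a; rw [hr]
        have := h1 a; omega
      · intro a; rw [hc n h]; exact e4 n hn h a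

lemma row_des {w : ℕ → ℕ} {s0 x y : ℕ} (h1 : Dec w s0 (x+1)) (h2 : Dec w (s0+(x+1)) (y+1)) :
    Des (cnt w s0) (cnt w (s0+(x+1))) (cnt w (s0+(x+1)+(y+1))) ↔ w (s0+x) < w (s0+x+1) := by
  constructor
  · rintro ⟨i, i', h, a, b⟩
    obtain ⟨k, p1, p2, p3⟩ := cnt_occ.1 a
    obtain ⟨k', p1', p2', p3'⟩ := cnt_occ.1 b
    have := h1 k (s0+x) p1 (by omega) (by omega)
    have := h2 (s0+(x+1)) k' (by omega) p1' p2'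
    have e : s0 + (x+1) = s0+x+1 := by omega
    rw [e] at this; omega
  · intro h
    exact ⟨_, _, h, cnt_occ.2 ⟨s0+x, by omega, by omega, rfl⟩, cnt_occ.2 ⟨s0+x+1, by omega, by omega, rfl⟩⟩

def Sal : List ℕ → ℕ → Prop
  | [], _ => False
  | _ :: α, k => Sal α k ∨ k + 1 = α.sum

def chn (w : ℕ → ℕ) : List ℕ → List Sh
  | [] => [cnt w 0]
  | y :: α => cnt w (α.sum + y) :: chn w α

lemma hd_chn (w α) : hd (chn w α) = cnt w α.sum := by
  cases α <;> simp [chn, add_comm]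

structure Good (α : List ℕ) (w : ℕ → ℕ) : Prop where
  lat : ∀ n ≤ α.sum, Lat w n
  des : ∀ k, k + 1 < α.sum → (w k < w (k+1) ↔ Sal α k)

lemma Sal_lt : ∀ {α : List ℕ} {k}, (∀ x ∈ α, 0 < x) → Sal α k → k + 1 < α.sum
  | y :: α, k, hp, h => by
    have := hp y (by simp)
    rcases h with h | h
    · have := Sal_lt (fun x hx => hp x (by simp [hx])) h; simp; omega
    · simp; omega

lemma Good_tail {y α w} (h : Good (y :: α) w) : Good α w := by
  refine ⟨fun n hn => h.lat n (by simp; omega), fun k hk => ?_⟩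
  rw [h.des k (by simp; omega)]
  simp only [Sal]
  constructor
  · rintro (h | h)
    · exact h
    · omega
  · exact Or.inl

lemma Good_dec {y α w} (hp : ∀ x ∈ α, 0 < x) (h : Good (y :: α) w) : Dec w α.sum y := by
  intro k k' hk hkk hk'
  induction k', hkk using Nat.le_induction with
  | base => exact le_rfl
  | succ m hm ih =>
    have := h.des m (by simp; omega)
    have h2 : ¬ Sal (y :: α) m := by
      rintro (h | h)
      · have := Sal_lt hp h; omega
      · omega
    have := ih (by omega)
    have : ¬ w m < w (m+1) := fun h' => h2 ((h.des m (by simp; omega)).1 h')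
    omega

lemma lat_sup {w : ℕ → ℕ} : ∀ {n : ℕ}, (∀ m ≤ n, Lat w m) → ∀ a, n ≤ a → cnt w n a = 0
  | 0, _, a, _ => by simp [cnt]
  | n+1, h, a, ha => by
    have ih := lat_sup (n := n) (fun m hm => h m (by omega))
    rw [cnt_succ, ih a (by omega)]
    split_ifs with hw
    · exfalso
      obtain ⟨b, rfl⟩ : ∃ b, a = b + 1 := ⟨a - 1, by omega⟩
      have := h (n+1) le_rfl b
      rw [cnt_succ, cnt_succ, ih (b+1) (by omega), ih b (by omega), if_pos hw, if_neg (by omega)] at this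
      omega
    · rfl

lemma sz_cnt {w : ℕ → ℕ} {M : ℕ} : ∀ {n : ℕ}, (∀ a, M ≤ a → cnt w n a = 0) → sz M (cnt w n) = n
  | 0, _ => by simp [sz, cnt]
  | n+1, h => by
    have h' : ∀ a, M ≤ a → cnt w n a = 0 := fun a ha => by
      have := h a ha; have := cnt_mono w (show n ≤ n+1 by omega) a; omega
    have hw : w n < M := by
      by_contra hc
      have := h (w n) (by omega)
      rw [cnt_succ, if_pos rfl] at this; omega
    have ih := sz_cnt h'
    unfold sz at *
    rw [sum_congr rfl (fun a _ => cnt_succ w n a), sum_add_distrib, ih]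
    simp [hw]

lemma Good_Ok {M w} : ∀ {α}, (∀ x ∈ α, 0 < x) → α.sum ≤ M → Good α w → Ok M α (chn w α)
  | [], _, _, _ => ⟨cnt_zero w, trivial, trivial, fun a _ => by simp [chn, cnt_zero]⟩
  | y :: α, hp, hM, h => by
    have hp' : ∀ x ∈ α, 0 < x := fun x hx => hp x (by simp [hx])
    have hy := hp y (by simp)
    simp at hM
    have ih := Good_Ok (M := M) hp' (by omega) (Good_tail h)
    have hd := Good_dec hp' h
    have hst : Strip (cnt w α.sum) (cnt w (α.sum + y)) := row_strip hd (fun n hn => h.lat n (by simp; omega))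
    have hsup : ∀ a, M ≤ a → cnt w (α.sum + y) a = 0 := fun a ha =>
      lat_sup (n := α.sum + y) (fun m hm => h.lat m (by simp; omega)) a (by omega)
    have hsz : sz M (cnt w (α.sum + y)) = sz M (cnt w α.sum) + y := by
      rw [sz_cnt hsup, sz_cnt (sup_strip hst hsup)]
    match α, hp, hp', hM, ih, hd, hst, hsup, hsz, h with
    | [], hp, hp', hM, ih, hd, hst, hsup, hsz, h =>
      refine ⟨⟨hst, cnt_zero w⟩, ⟨?_, trivial⟩, trivial, ?_⟩
      · exact hsz
      · exact hsup
    | x :: α, hp, hp', hM, ih, hd, hst, hsup, hsz, h =>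
      show Ok M (y :: x :: α) (cnt w ((x :: α).sum + y) :: chn w (x :: α))
      rw [Ok_cons (by simp), hd_chn]
      refine ⟨hst, hsz, ih, ?_, hsup⟩
      have : Rib.hd (chn w (x :: α)).tail = cnt w α.sum := hd_chn w α
      rw [this]
      have hx := hp x (by simp)
      have hd2 := Good_dec (fun z hz => hp z (by simp [hz])) (Good_tail h)
      obtain ⟨x, rfl⟩ : ∃ x', x = x' + 1 := ⟨x - 1, by omega⟩
      obtain ⟨y, rfl⟩ : ∃ x', y = x' + 1 := ⟨y - 1, by omega⟩
      have es : ((x+1) :: α).sum = α.sum + (x+1) := by simp [add_comm]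
      rw [es] at hd ⊢
      rw [row_des hd2 hd, h.des _ (by simp; omega)]
      right; rw [es]; omega

lemma chn_inj {w w'} : ∀ {α}, (∀ x ∈ α, 0 < x) → Good α w → Good α w' → chn w α = chn w' α →
    ∀ k < α.sum, w k = w' k
  | [], _, _, _, _, k, hk => by simp at hk
  | y :: α, hp, h, h', e, k, hk => by
    have hp' : ∀ x ∈ α, 0 < x := fun x hx => hp x (by simp [hx])
    simp only [chn, List.cons.injEq] at e
    have ih := chn_inj hp' (Good_tail h) (Good_tail h') e.2
    rcases Nat.lt_or_ge k α.sum with hk' | hk'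
    · exact ih k hk'
    · exact row_inj (cnt_congr ih) (Good_dec hp' h) (Good_dec hp' h') e.1 k hk' (by simp at hk; omega)

lemma Ok_tail {M y α r l} (h : Ok M (y :: α) (r :: l)) : Ok M α l := by
  have hl := h.len
  obtain ⟨h1, h2, h3, h4⟩ := h
  simp at hl
  rw [Sc_cons _ (by omega)] at h1
  refine ⟨h1.2, h2.2, ?_, sup_strip h1.1 h4⟩
  match l, h3 with
  | [], _ => trivial
  | [_], _ => trivial
  | _ :: _ :: _, h3 => exact h3.2

lemma chn_congr {w w'} : ∀ {α : List ℕ}, (∀ k < α.sum, w k = w' k) → chn w α = chn w' α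
  | [], _ => by simp [chn, cnt_zero]
  | y :: α, h => by
    simp only [chn]
    rw [chn_congr (fun k hk => h k (by simp; omega)), cnt_congr (fun k hk => h k (by simp; omega))]

lemma chn_surj {M} : ∀ {α l}, (∀ x ∈ α, 0 < x) → Ok M α l → ∃ w, Good α w ∧ chn w α = l
  | [], l, _, h => by
    have hl := h.len
    match l, hl with
    | [z], _ =>
      have : z = fun _ => 0 := h.sc
      subst this
      refine ⟨fun _ => 0, ⟨?_, ?_⟩, by simp [chn, cnt_zero]⟩
      · intro n hn a
        have : n = 0 := by simpa using hn
        rw [this, cnt_zero]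
      · intro k hk; simp at hk
  | y :: α, [], _, h => h.sc.elim
  | y :: α, r :: l, hp, h => by
    have hp' : ∀ x ∈ α, 0 < x := fun x hx => hp x (by simp [hx])
    have hy := hp y (by simp)
    have ht := Ok_tail h
    have hl := ht.len
    obtain ⟨w, hw, rfl⟩ := chn_surj hp' ht
    have hst := ((Sc_cons r (by omega)).1 h.sc).1
    have hrow := h.rows.1
    rw [hd_chn] at hst hrow
    obtain ⟨w', e1, e2, e3, e4⟩ := row_ex (M := M) (hw.lat _ le_rfl) hst hrow h.sup
    have hc : chn w' α = chn w α := chn_congr e1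
    have hcc : ∀ n ≤ α.sum, cnt w' n = cnt w n := fun n hn => cnt_congr fun k hk => e1 k (by omega)
    refine ⟨w', ⟨?_, ?_⟩, by rw [chn, hc, e3]⟩
    · intro n hn
      rcases Nat.lt_or_ge n α.sum with h | h
      · intro a; rw [hcc n (by omega)]; exact hw.lat n (by omega) a
      · exact e4 n h (by simp at hn; omega)
    · intro k hk
      simp at hk
      rcases Nat.lt_trichotomy (k+1) α.sum with hk' | hk' | hk'
      · rw [e1 k (by omega), e1 (k+1) hk', hw.des k hk']
        simp only [Sal]
        constructor
        · exact Or.inl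
        · rintro (h | h)
          · exact h
          · omega
      · refine ⟨fun _ => Or.inr hk', fun _ => ?_⟩
        match α, hp, hp', hw, h, e2, e3, hk, hk', hc, e1, hcc with
        | [], _, _, _, _, _, _, _, hk', _, _, _ => simp at hk'
        | x :: α, hp, hp', hw, h, e2, e3, hk, hk', hc, e1, hcc =>
          rw [Ok_cons (by simp), hd_chn] at h
          have hdes := h.2.2.2.1
          have : Rib.hd (chn w (x :: α)).tail = cnt w α.sum := hd_chn w α
          rw [this, ← hcc _ le_rfl, ← hcc α.sum (by simp), ← e3] at hdes
          have hx := hp x (by simp)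
          have hg' : Good (x :: α) w' := by
            refine ⟨fun n hn a => by rw [hcc n hn]; exact hw.lat n hn a, fun k hk => ?_⟩
            rw [e1 k (by omega), e1 (k+1) hk, hw.des k hk]
          have hd2 := Good_dec (fun z hz => hp z (by simp [hz])) hg'
          obtain ⟨x, rfl⟩ : ∃ x', x = x' + 1 := ⟨x - 1, by omega⟩
          obtain ⟨y, rfl⟩ : ∃ x', y = x' + 1 := ⟨y - 1, by omega⟩
          have es : ((x+1) :: α).sum = α.sum + (x+1) := by simp [add_comm]
          rw [es] at e2 hdes hk'
          rw [row_des hd2 e2] at hdes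
          rw [show k = α.sum + x by omega]; exact hdes
      · have h1 := e2 k (k+1) (by omega) (by omega) (by omega)
        constructor
        · intro h; omega
        · rintro (h | h)
          · have := Sal_lt hp' h; omega
          · omega

end Rib

namespace Rib
open Finset

structure Wd (N : ℕ) (S : ℕ → Prop) (w : ℕ → ℕ) : Prop where
  lat : ∀ n ≤ N, Lat w n
  des : ∀ k, k + 1 < N → (w k < w (k+1) ↔ S k)
  sup : ∀ k, N ≤ k → w k = 0

def Le (N : ℕ) (S S' : ℕ → Prop) : Prop := ∃ Φ : (ℕ → ℕ) → (ℕ → ℕ),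
  (∀ w, Wd N S w → Wd N S' (Φ w) ∧ cnt (Φ w) N = cnt w N) ∧
  ∀ w w', Wd N S w → Wd N S w' → Φ w = Φ w' → w = w'

def Str (N : ℕ) (S S' : ℕ → Prop) : Prop := ∃ v, Wd N S' v ∧ ∀ w, Wd N S w → cnt w N ≠ cnt v N

open Classical in
noncomputable def rr (S : ℕ → Prop) (k : ℕ) : ℕ := ((range k).filter S).card

noncomputable def fib (S : ℕ → Prop) (N t : ℕ) : ℕ := ((range N).filter (fun k => rr S k = t)).card

def RE (N : ℕ) (S : ℕ → Prop) : Prop :=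
  ∀ t t', 0 < fib S N t → 0 < fib S N t' → fib S N t ≤ fib S N t' + 1

lemma rr_mono (S : ℕ → Prop) {k k' : ℕ} (h : k ≤ k') : rr S k ≤ rr S k' := by
  classical
  unfold rr; apply card_le_card; intro x hx; simp only [mem_filter, mem_range] at hx ⊢; exact ⟨by omega, hx.2⟩

lemma rr_succ (S : ℕ → Prop) (k : ℕ) [Decidable (S k)] : rr S (k+1) = rr S k + if S k then 1 else 0 := by
  unfold rr
  rw [range_add_one, filter_insert]
  by_cases h : S k
  · rw [if_pos h, if_pos h, card_insert_of_notMem (by simp)]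
  · rw [if_neg h, if_neg h]; rfl

lemma rr_congr {S S' : ℕ → Prop} {k : ℕ} (h : ∀ i < k, S i ↔ S' i) : rr S k = rr S' k := by
  classical
  unfold rr; congr 1; ext i; simp only [mem_filter, mem_range]; exact and_congr_right (fun hi => h i hi)

lemma rr_zero (S) : rr S 0 = 0 := by simp [rr]

lemma fib_congr {S S' : ℕ → Prop} {N t : ℕ} (h : ∀ i, i + 1 < N → (S i ↔ S' i)) : fib S N t = fib S' N t := by
  unfold fib; congr 1; apply filter_congr; intro k hk
  rw [rr_congr]; intro i hi; apply h; simp at hk; omega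

lemma Wd_congr {S S' : ℕ → Prop} {N : ℕ} (h : ∀ i, i + 1 < N → (S i ↔ S' i)) {w} (hw : Wd N S w) : Wd N S' w :=
  ⟨hw.lat, fun k hk => (hw.des k hk).trans (h k hk), hw.sup⟩

lemma ex_comp (S : ℕ → Prop) : ∀ N, 1 ≤ N → ∃ y α, 0 < y ∧ (∀ x ∈ α, 0 < x) ∧ (y :: α).sum = N ∧
    ∀ k, k + 1 < N → (S k ↔ Sal (y :: α) k) := by
  intro N hN
  induction N, hN using Nat.le_induction with
  | base => exact ⟨1, [], by omega, by simp, by simp, fun k hk => by omega⟩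
  | succ n hn ih =>
    obtain ⟨y, α, h1, h2, h3, h4⟩ := ih
    by_cases hS : S (n-1)
    · refine ⟨1, y :: α, by omega, ?_, by simp at h3 ⊢; omega, ?_⟩
      · intro x hx; simp at hx; rcases hx with rfl | hx
        · exact h1
        · exact h2 x hx
      · intro k hk
        show S k ↔ Sal (y :: α) k ∨ k + 1 = (y :: α).sum
        rw [h3]
        rcases Nat.lt_or_ge (k+1) n with h | h
        · rw [h4 k h]; constructor
          · exact Or.inl
          · rintro (h | h)
            · exact h
            · omega
        · have : k = n - 1 := by omega
          subst this
          simp only [hS, true_iff]; right; omega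
    · refine ⟨y+1, α, by omega, h2, by simp at h3 ⊢; omega, ?_⟩
      intro k hk
      rcases Nat.lt_or_ge (k+1) n with h | h
      · rw [h4 k h]; rfl
      · have : k = n - 1 := by omega
        subst this
        simp only [hS, false_iff]
        intro h'
        have : Sal (y :: α) (n-1) := h'
        have := Sal_lt (by intro x hx; simp at hx; rcases hx with rfl | hx
                           · exact h1
                           · exact h2 x hx) this
        omega

lemma fib_mem : ∀ (α : List ℕ), (∀ x ∈ α, 0 < x) → ∀ t, fib (Sal α) α.sum t = 0 ∨ fib (Sal α) α.sum t ∈ α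
  | [], _, t => by simp [fib]
  | y :: α, hp, t => by
    have hp' : ∀ x ∈ α, 0 < x := fun x hx => hp x (by simp [hx])
    have ih := fib_mem α hp' t
    have e1 : fib (Sal (y :: α)) α.sum t = fib (Sal α) α.sum t := fib_congr (by
      intro i hi; simp only [Sal]; constructor
      · rintro (h | h)
        · exact h
        · omega
      · exact Or.inl)
    have hconst : ∀ k, α.sum ≤ k → rr (Sal (y :: α)) k = rr (Sal (y :: α)) α.sum := by
      intro k hk
      induction k, hk using Nat.le_induction with
      | base => rfl
      | succ k hk ih =>
        classical
        rw [rr_succ, if_neg, ih, add_zero]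
        rintro (h | h)
        · have := Sal_lt hp' h; omega
        · omega
    have hs : (y :: α).sum = α.sum + y := by simp [add_comm]
    by_cases ht : t = rr (Sal (y :: α)) α.sum
    · right
      have : fib (Sal (y :: α)) (y :: α).sum t = y := by
        unfold fib
        have : (range (y :: α).sum).filter (fun k => rr (Sal (y :: α)) k = t) = Ico α.sum (α.sum + y) := by
          ext k
          simp only [mem_filter, mem_range, mem_Ico, hs]
          constructor
          · rintro ⟨h1, h2⟩
            refine ⟨?_, h1⟩
            by_contra hc
            classical
            obtain ⟨s, hs'⟩ : ∃ s, α.sum = s + 1 := ⟨α.sum - 1, by omega⟩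
            have h3 := rr_mono (Sal (y :: α)) (show k ≤ s by omega)
            have h4 := rr_succ (Sal (y :: α)) s
            rw [if_pos (show Sal (y :: α) s from Or.inr hs'.symm), ← hs'] at h4
            omega
          · rintro ⟨h1, h2⟩
            exact ⟨h2, by rw [hconst k h1, ht]⟩
        rw [this]; simp
      rw [this]; simp
    · have : fib (Sal (y :: α)) (y :: α).sum t = fib (Sal (y :: α)) α.sum t := by
        unfold fib; congr 1
        ext k
        simp only [mem_filter, mem_range, hs]
        constructor
        · rintro ⟨h1, h2⟩
          refine ⟨?_, h2⟩
          by_contra hc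
          exact ht (by rw [← h2, hconst k (by omega)])
        · rintro ⟨h1, h2⟩; exact ⟨by omega, h2⟩
      rw [this, e1]
      rcases ih with h | h
      · exact Or.inl h
      · right; simp [h]

lemma step_row {N S} (hN : 1 ≤ N) (h : ¬ RE N S) : ∃ S', Le N S S' ∧ Str N S S' := by
  classical
  obtain ⟨y, α, h1, h2, h3, h4⟩ := ex_comp S N hN
  have hp : ∀ x ∈ y :: α, 0 < x := by
    intro x hx; simp at hx; rcases hx with rfl | hx
    · exact h1
    · exact h2 x hx
  generalize y :: α = γ at h3 h4 hp
  unfold RE at h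
  push Not at h
  obtain ⟨t, t', a, b, c⟩ := h
  rw [fib_congr h4] at a
  rw [fib_congr (S := S) h4] at b
  rw [fib_congr h4, fib_congr (S := S) h4] at c
  rw [← h3] at a b c
  obtain ⟨β, b1, b2, b3, b4⟩ := row_move hp ⟨_, (fib_mem γ hp t').resolve_left (by omega), _,
    (fib_mem γ hp t).resolve_left (by omega), by omega⟩
  have toG : ∀ w, Wd N S w → Good γ w := fun w hw => ⟨fun n hn => hw.lat n (by omega), fun k hk => by
    rw [hw.des k (by omega), h4 k (by omega)]⟩
  have ofG : ∀ w, Good β w → Wd N (Sal β) (fun k => if k < N then w k else 0) ∧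
      chn (fun k => if k < N then w k else 0) β = chn w β := by
    intro w hw
    have hk : ∀ k < N, (fun k => if k < N then w k else 0) k = w k := fun k hk => if_pos hk
    refine ⟨⟨fun n hn => ?_, fun k hk' => ?_, fun k hk' => if_neg (by omega)⟩, ?_⟩
    · intro a; rw [cnt_congr (fun k hk' => hk k (by omega))]; exact hw.lat n (by omega) a
    · beta_reduce; rw [if_pos (show k < N by omega), if_pos hk', hw.des k (by omega)]
    · exact chn_congr (fun k hk' => hk k (by omega))
  have back : ∀ l, ∃ w, Ok N β l → Wd N (Sal β) w ∧ chn w β = l := by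
    intro l
    by_cases hl : Ok N β l
    · obtain ⟨w, hw, rfl⟩ := chn_surj b1 hl
      exact ⟨_, fun _ => ofG w hw⟩
    · exact ⟨fun _ => 0, fun h => (hl h).elim⟩
  choose bk hbk using back
  obtain ⟨F, hF1, hF2⟩ := b3 N
  refine ⟨Sal β, ⟨fun w => bk (F (chn w γ)), ?_, ?_⟩, ?_⟩
  · intro w hw
    have k1 := hF1 _ (Good_Ok (M := N) hp (by omega) (toG w hw))
    have k2 := hbk _ k1.1
    refine ⟨k2.1, ?_⟩
    have := hd_chn (bk (F (chn w γ))) β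
    rw [k2.2, k1.2, hd_chn, h3, b2, h3] at this
    exact this.symm
  · intro w w' hw hw' e
    have o := Good_Ok (M := N) hp (by omega) (toG w hw)
    have o' := Good_Ok (M := N) hp (by omega) (toG w' hw')
    have k1 := hF1 _ o
    have k2 := hbk _ k1.1
    have k1' := hF1 _ o'
    have k2' := hbk _ k1'.1
    have e2 : F (chn w γ) = F (chn w' γ) := by rw [← k2.2, ← k2'.2]; beta_reduce at e; rw [e]
    have e3 := chn_inj hp (toG w hw) (toG w' hw') (hF2 _ _ o o' e2)
    funext k
    rcases Nat.lt_or_ge k N with h | h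
    · exact e3 k (by omega)
    · rw [hw.sup k h, hw'.sup k h]
  · obtain ⟨l, l1, l2⟩ := b4 N (by omega)
    have k2 := hbk l l1
    refine ⟨bk l, k2.1, ?_⟩
    intro w hw e
    refine l2 _ (Good_Ok (M := N) hp (by omega) (toG w hw)) ?_
    rw [← k2.2, hd_chn, hd_chn, h3, b2, h3, e]

/-! transposition -/

def trp (N : ℕ) (w : ℕ → ℕ) : ℕ → ℕ := fun i => if i < N then cnt w i (w i) else 0

lemma Lat.anti {w n} (h : Lat w n) {a b : ℕ} (hab : a ≤ b) : cnt w n b ≤ cnt w n a := by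
  induction b, hab using Nat.le_induction with
  | base => exact le_rfl
  | succ b _ ih => exact (h b).trans ih

lemma cnt_trp {N w} (h : ∀ n ≤ N, Lat w n) (m : ℕ) : ∀ n ≤ N,
    cnt (trp N w) n m = ((range N).filter (fun a => m < cnt w n a)).card := by
  intro n
  induction n with
  | zero => intro _; simp [cnt]
  | succ n ih =>
    intro hn
    have hwn : w n < N := by
      by_contra hc
      have := lat_sup (n := n+1) (fun m hm => h m (by omega)) (w n) (by omega)
      rw [cnt_succ, if_pos rfl] at this; omega
    rw [cnt_succ, ih (by omega)]
    have ht : trp N w n = cnt w n (w n) := if_pos (by omega)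
    rw [ht]
    split_ifs with hm
    · have : (range N).filter (fun a => m < cnt w (n+1) a) = insert (w n) ((range N).filter (fun a => m < cnt w n a)) := by
        ext a
        simp only [mem_filter, mem_range, mem_insert, cnt_succ]
        by_cases ha : w n = a
        · subst ha; simp [hwn, hm]
        · rw [if_neg ha, add_zero]
          constructor
          · exact Or.inr
          · rintro (h | h)
            · exact (ha h.symm).elim
            · exact h
      rw [this, card_insert_of_notMem (by simp [hm])]
    · rw [add_zero]; congr 1; apply filter_congr; intro a _
      rw [cnt_succ]
      by_cases ha : w n = a
      · subst ha; rw [if_pos rfl]; omega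
      · rw [if_neg ha, add_zero]

lemma trp_Wd {N S w} (h : Wd N S w) : Wd N (fun k => ¬ S k) (trp N w) := by
  refine ⟨?_, ?_, fun k hk => if_neg (by omega)⟩
  · intro n hn a
    rw [cnt_trp h.lat _ n hn, cnt_trp h.lat _ n hn]
    apply card_le_card
    intro x; simp only [mem_filter]; intro hx; exact ⟨hx.1, by omega⟩
  · intro k hk
    rw [← h.des k hk]
    have e1 : trp N w k = cnt w k (w k) := if_pos (by omega)
    have e2 : trp N w (k+1) = cnt w (k+1) (w (k+1)) := if_pos (by omega)
    rw [e1, e2, cnt_succ]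
    rcases Nat.lt_trichotomy (w k) (w (k+1)) with hc | hc | hc
    · rw [if_neg (by omega)]
      have := (h.lat k (by omega)).anti (Nat.le_of_lt hc)
      constructor <;> intro h' <;> omega
    · rw [if_pos hc, hc]
      constructor <;> intro h' <;> omega
    · rw [if_neg (by omega)]
      have h1 := h.lat (k+1) (by omega) (w k - 1)
      have h2 := (h.lat (k+1) (by omega)).anti (show w (k+1) ≤ w k - 1 by omega)
      rw [show w k - 1 + 1 = w k by omega, cnt_succ, if_pos rfl] at h1
      rw [cnt_succ w k (w (k+1)), if_neg (by omega)] at h2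
      constructor <;> intro h' <;> omega

lemma trp_trp {N S w} (h : Wd N S w) : trp N (trp N w) = w := by
  funext i
  rcases Nat.lt_or_ge i N with hi | hi
  swap
  · rw [h.sup i hi]; exact if_neg (by omega)
  have e1 : trp N (trp N w) i = cnt (trp N w) i (trp N w i) := if_pos hi
  have e2 : trp N w i = cnt w i (w i) := if_pos hi
  rw [e1, e2, cnt_trp h.lat _ i (by omega)]
  have hwn : w i < N := by
    by_contra hc
    have := lat_sup (n := i+1) (fun m hm => h.lat m (by omega)) (w i) (by omega)
    rw [cnt_succ, if_pos rfl] at this; omega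
  have : (range N).filter (fun a => cnt w i (w i) < cnt w i a) = range (w i) := by
    ext a
    simp only [mem_filter, mem_range]
    constructor
    · rintro ⟨_, h2⟩
      by_contra hc
      have := (h.lat i (by omega)).anti (show w i ≤ a by omega); omega
    · intro ha
      refine ⟨by omega, ?_⟩
      have h1 := h.lat (i+1) (by omega) (w i - 1)
      have h2 := (h.lat i (by omega)).anti (show a ≤ w i - 1 by omega)
      rw [show w i - 1 + 1 = w i by omega, cnt_succ, if_pos rfl, cnt_succ, if_neg (by omega)] at h1
      omega
  rw [this, card_range]

lemma trp_cnt {N S S' w v} (h : Wd N S w) (h' : Wd N S' v) (e : cnt w N = cnt v N) :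
    cnt (trp N w) N = cnt (trp N v) N := by
  funext m
  rw [cnt_trp h.lat _ N le_rfl, cnt_trp h'.lat _ N le_rfl, e]

lemma Wd_nn {N S w} (h : Wd N (fun k => ¬ ¬ S k) w) : Wd N S w := Wd_congr (fun _ _ => not_not) h

lemma step_col {N S} (hN : 1 ≤ N) (h : ¬ RE N (fun k => ¬ S k)) : ∃ S', Le N S S' ∧ Str N S S' := by
  obtain ⟨S', ⟨Φ, f1, f2⟩, v, v1, v2⟩ := step_row hN h
  refine ⟨fun k => ¬ S' k, ⟨fun w => trp N (Φ (trp N w)), ?_, ?_⟩, trp N v, trp_Wd v1, ?_⟩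
  · intro w hw
    have k := f1 _ (trp_Wd hw)
    refine ⟨trp_Wd k.1, ?_⟩
    have := trp_cnt k.1 (trp_Wd hw) k.2
    rwa [trp_trp hw] at this
  · intro w w' hw hw' e
    have k := f1 _ (trp_Wd hw)
    have k' := f1 _ (trp_Wd hw')
    have e2 := congrArg (trp N) e
    beta_reduce at e2
    rw [trp_trp k.1, trp_trp k'.1] at e2
    have e3 := congrArg (trp N) (f2 _ _ (trp_Wd hw) (trp_Wd hw') e2)
    rwa [trp_trp hw, trp_trp hw'] at e3
  · intro w hw e
    have := trp_cnt hw (trp_Wd v1) e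
    rw [trp_trp v1] at this
    exact v2 _ (trp_Wd hw) this

lemma Wd_bd {N S w} (h : Wd N S w) (k : ℕ) : w k ≤ N := by
  rcases Nat.lt_or_ge k N with hk | hk
  · by_contra hc
    have := lat_sup (n := N) (fun m hm => h.lat m (by omega)) (w k) (by omega)
    have h2 : cnt w (0+N) (w k) > cnt w 0 (w k) := cnt_occ.2 ⟨k, by omega, by omega, rfl⟩
    rw [zero_add] at h2; omega
  · rw [h.sup k hk]; omega

lemma fin_words (N : ℕ) : {w : ℕ → ℕ | (∀ k, w k ≤ N) ∧ ∀ k, N ≤ k → w k = 0}.Finite := by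
  apply Set.Finite.of_finite_image (f := fun w => fun (i : Fin N) => (Fin.ofNat (N+1) (w i)))
  · exact Set.toFinite _
  · intro w hw w' hw' e
    funext k
    rcases Nat.lt_or_ge k N with hk | hk
    · have := congrArg Fin.val (congrFun e ⟨k, hk⟩)
      simp only [Fin.val_ofNat] at this
      rwa [Nat.mod_eq_of_lt (by have := hw.1 k; omega), Nat.mod_eq_of_lt (by have := hw'.1 k; omega)] at this
    · rw [hw.2 k hk, hw'.2 k hk]

def cs (N : ℕ) (S : ℕ → Prop) : Set Sh := (fun w => cnt w N) '' {w | Wd N S w}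

lemma cs_sub (N S) : cs N S ⊆ (fun w => cnt w N) '' {w : ℕ → ℕ | (∀ k, w k ≤ N) ∧ ∀ k, N ≤ k → w k = 0} :=
  Set.image_mono fun w (hw : Wd N S w) => ⟨Wd_bd hw, hw.sup⟩

lemma Le_trans {N S S' S''} (h : Le N S S') (h' : Le N S' S'') : Le N S S'' := by
  obtain ⟨f, f1, f2⟩ := h
  obtain ⟨g, g1, g2⟩ := h'
  refine ⟨g ∘ f, fun w hw => ⟨(g1 _ (f1 w hw).1).1, ((g1 _ (f1 w hw).1).2).trans (f1 w hw).2⟩, ?_⟩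
  intro w w' hw hw' e
  exact f2 _ _ hw hw' (g2 _ _ (f1 w hw).1 (f1 w' hw').1 e)

lemma cs_lt {N S S'} (h : Le N S S') (h' : Str N S S') : (cs N S).ncard < (cs N S').ncard := by
  apply Set.ncard_lt_ncard _ (((fin_words N).image _).subset (cs_sub N S'))
  obtain ⟨f, f1, f2⟩ := h
  obtain ⟨v, v1, v2⟩ := h'
  rw [Set.ssubset_iff_of_subset]
  · refine ⟨_, ⟨v, v1, rfl⟩, ?_⟩
    rintro ⟨w, hw, e⟩
    exact v2 w hw e
  · rintro _ ⟨w, hw, rfl⟩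
    exact ⟨f w, (f1 w hw).1, (f1 w hw).2⟩

theorem words_final {N : ℕ} (hN : 1 ≤ N) : ∀ (n : ℕ) (S : ℕ → Prop),
    ((fun w => cnt w N) '' {w : ℕ → ℕ | (∀ k, w k ≤ N) ∧ ∀ k, N ≤ k → w k = 0}).ncard - (cs N S).ncard = n →
    ∃ S', Le N S S' ∧ RE N S' ∧ RE N (fun k => ¬ S' k) ∧ (¬ (RE N S ∧ RE N (fun k => ¬ S k)) → Str N S S') := by
  intro n
  induction n using Nat.strong_induction_on with
  | _ n ih =>
    intro S hS
    by_cases hc : RE N S ∧ RE N (fun k => ¬ S k)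
    · exact ⟨S, ⟨id, fun w hw => ⟨hw, rfl⟩, fun _ _ _ _ e => e⟩, hc.1, hc.2, fun h => (h hc).elim⟩
    · have : ∃ S', Le N S S' ∧ Str N S S' := by
        by_cases h1 : RE N S
        · exact step_col hN (fun h => hc ⟨h1, h⟩)
        · exact step_row hN h1
      obtain ⟨S1, l1, s1⟩ := this
      have h1 := cs_lt l1 s1
      have h2 := Set.ncard_le_ncard (cs_sub N S1) ((fin_words N).image _)
      obtain ⟨S', a, b, c, d⟩ := ih _ (by omega) S1 rfl
      refine ⟨S', Le_trans l1 a, b, c, fun _ => ?_⟩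
      obtain ⟨v, v1, v2⟩ := s1
      obtain ⟨f, f1, f2⟩ := a
      exact ⟨f v, (f1 v v1).1, fun w hw => by rw [(f1 v v1).2]; exact v2 w hw⟩

end Rib

namespace Rib
open Finset

lemma rr_add (S : ℕ → Prop) (k : ℕ) : rr S k + rr (fun k => ¬ S k) k = k := by
  classical
  induction k with
  | zero => simp [rr_zero]
  | succ k ih =>
    rw [rr_succ, rr_succ]
    by_cases h : S k
    · rw [if_pos h, if_neg (not_not.2 h)]; omega
    · rw [if_neg h, if_pos h]; omega

lemma rr_const {S : ℕ → Prop} {m k i : ℕ} (h : rr S m = rr S k) (h1 : m ≤ i) (h2 : i < k) : ¬ S i := by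
  classical
  intro hS
  have a := rr_mono S h1
  have b := rr_mono S (show i + 1 ≤ k from h2)
  rw [rr_succ, if_pos hS] at b
  omega

structure Pth (A : SkewShape) (N : ℕ) (S : ℕ → Prop) (p : ℕ → ℕ × ℕ) (I J : ℕ) : Prop where
  img : A.cells = (range N).image p
  fst : ∀ k < N, (p k).1 = I + rr S k
  snd : ∀ k < N, (p k).2 + rr (fun k => ¬ S k) k = J

variable {A : SkewShape} {N : ℕ} {S : ℕ → Prop} {p : ℕ → ℕ × ℕ} {I J : ℕ}

lemma Pth.mem (h : Pth A N S p I J) {c} : c ∈ A.cells ↔ ∃ k < N, p k = c := by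
  rw [h.img]; simp

lemma Pth.pm (h : Pth A N S p I J) {k} (hk : k < N) : p k ∈ A.cells := h.mem.2 ⟨k, hk, rfl⟩

lemma Pth.inj (h : Pth A N S p I J) {k m} (hk : k < N) (hm : m < N) (e : p k = p m) : k = m := by
  have a := h.fst k hk
  have b := h.snd k hk
  have a' := h.fst m hm
  have b' := h.snd m hm
  have := rr_add S k
  have := rr_add S m
  rw [e] at a b
  omega

lemma Pth.card (h : Pth A N S p I J) (Q : ℕ × ℕ → Prop) [DecidablePred Q] :
    (A.cells.filter Q).card = ((range N).filter (fun k => Q (p k))).card := by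
  rw [h.img, filter_image, card_image_of_injOn]
  intro k hk m hm e
  simp at hk hm
  exact h.inj hk.1 hm.1 e

lemma Pth.size (h : Pth A N S p I J) : A.size = N := by
  have := h.card (fun _ => True)
  simpa [SkewShape.size] using this

lemma Pth.rb (h : Pth A N S p I J) {k m} (hk : k < N) (hm : m < N) : ReadsBefore (p k) (p m) ↔ k ≤ m := by
  have a := h.fst k hk
  have b := h.snd k hk
  have a' := h.fst m hm
  have b' := h.snd m hm
  have := rr_add S k
  have := rr_add S m
  unfold ReadsBefore
  rcases Nat.le_total k m with hkm | hkm
  · have := rr_mono S hkm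
    have := rr_mono (fun k => ¬ S k) hkm
    omega
  · have := rr_mono S hkm
    have := rr_mono (fun k => ¬ S k) hkm
    omega

lemma Pth.rowE (h : Pth A N S p I J) : A.RowEquitable ↔ RE N S := by
  have key : ∀ t, A.rowLen (I + t) = fib S N t := by
    intro t
    unfold SkewShape.rowLen fib
    rw [h.card]
    congr 1; apply filter_congr; intro k hk
    rw [h.fst k (by simpa using hk)]; omega
  have key2 : ∀ i, i ∈ A.rowSet ↔ ∃ t, i = I + t ∧ 0 < fib S N t := by
    intro i
    unfold SkewShape.rowSet fib
    simp only [mem_image, card_pos]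
    constructor
    · rintro ⟨c, hc, rfl⟩
      obtain ⟨k, hk, rfl⟩ := h.mem.1 hc
      exact ⟨_, h.fst k hk, k, by simp [hk]⟩
    · rintro ⟨t, rfl, k, hk⟩
      simp at hk
      exact ⟨p k, h.pm hk.1, by rw [h.fst k hk.1, hk.2]⟩
  constructor
  · intro H t t' ht ht'
    rw [← key, ← key]
    exact H _ ((key2 _).2 ⟨t, rfl, ht⟩) _ ((key2 _).2 ⟨t', rfl, ht'⟩)
  · intro H i hi i' hi'
    obtain ⟨t, rfl, ht⟩ := (key2 _).1 hi
    obtain ⟨t', rfl, ht'⟩ := (key2 _).1 hi'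
    rw [key, key]; exact H _ _ ht ht'

lemma Pth.colE (h : Pth A N S p I J) : A.ColEquitable ↔ RE N (fun k => ¬ S k) := by
  have key : ∀ j t, j + t = J → A.colLen j = fib (fun k => ¬ S k) N t := by
    intro j t hjt
    unfold SkewShape.colLen fib
    rw [h.card]
    congr 1; apply filter_congr; intro k hk
    have := h.snd k (by simpa using hk)
    omega
  have key2 : ∀ j, j ∈ A.colSet ↔ ∃ t, j + t = J ∧ 0 < fib (fun k => ¬ S k) N t := by
    intro i
    unfold SkewShape.colSet fib
    simp only [mem_image, card_pos]
    constructor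
    · rintro ⟨c, hc, rfl⟩
      obtain ⟨k, hk, rfl⟩ := h.mem.1 hc
      exact ⟨_, h.snd k hk, k, by simp [hk]⟩
    · rintro ⟨t, ht, k, hk⟩
      simp only [mem_filter, mem_range] at hk
      refine ⟨p k, h.pm hk.1, ?_⟩
      have := h.snd k hk.1
      omega
  have key3 : ∀ t, 0 < fib (fun k => ¬ S k) N t → ∃ j, j + t = J := by
    intro t ht
    unfold fib at ht
    rw [card_pos] at ht
    obtain ⟨k, hk⟩ := ht
    simp only [mem_filter, mem_range] at hk
    have := h.snd k hk.1
    exact ⟨(p k).2, by omega⟩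
  constructor
  · intro H t t' ht ht'
    obtain ⟨j, hj⟩ := key3 t ht
    obtain ⟨j', hj'⟩ := key3 t' ht'
    rw [← key j t hj, ← key j' t' hj']
    exact H _ ((key2 _).2 ⟨t, hj, ht⟩) _ ((key2 _).2 ⟨t', hj', ht'⟩)
  · intro H i hi i' hi'
    obtain ⟨t, hj, ht⟩ := (key2 _).1 hi
    obtain ⟨t', hj', ht'⟩ := (key2 _).1 hi'
    rw [key _ _ hj, key _ _ hj']; exact H _ _ ht ht'

lemma Pth.ssyt (h : Pth A N S p I J) (T : ℕ × ℕ → ℕ) : A.IsSsyt T ↔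
    (∀ k < N, 1 ≤ T (p k)) ∧ ∀ k, k + 1 < N → (T (p k) < T (p (k+1)) ↔ S k) := by
  classical
  constructor
  · rintro ⟨h1, h2, h3⟩
    refine ⟨fun k hk => h1 _ (h.pm hk), fun k hk => ?_⟩
    have a := h.fst k (by omega)
    have b := h.snd k (by omega)
    have a' := h.fst (k+1) hk
    have b' := h.snd (k+1) hk
    rw [rr_succ] at a' b'
    by_cases hS : S k
    · rw [if_pos hS] at a'
      rw [if_neg (not_not.2 hS)] at b'
      refine iff_of_true ?_ hS
      have e : p (k+1) = ((p (k+1)).1, (p k).2) := Prod.ext rfl (by simp; omega)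
      have m := h.pm hk
      rw [e] at m ⊢
      exact h3 _ _ _ (h.pm (show k < N by omega)) m (by omega)
    · rw [if_neg hS] at a'
      rw [if_pos hS] at b'
      refine iff_of_false ?_ hS
      rw [not_lt]
      have e : p (k+1) = ((p k).1, (p (k+1)).2) := Prod.ext (by simp; omega) rfl
      have m := h.pm hk
      rw [e] at m ⊢
      exact h2 _ _ _ m (h.pm (show k < N by omega)) (by omega)
  · rintro ⟨h1, h2⟩
    refine ⟨?_, ?_, ?_⟩
    · intro c hc
      obtain ⟨k, hk, rfl⟩ := h.mem.1 hc
      exact h1 k hk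
    · intro i j j' hc hc' hj
      obtain ⟨k, hk, e⟩ := h.mem.1 hc
      obtain ⟨m, hm, e'⟩ := h.mem.1 hc'
      have hmk : m ≤ k := by
        rw [← h.rb hm hk, e, e']; right; exact ⟨rfl, hj⟩
      have hrr : rr S m = rr S k := by
        have a := h.fst k hk
        have a' := h.fst m hm
        rw [e] at a; rw [e'] at a'; simp at a a'; omega
      rw [← e, ← e']
      have : ∀ n, m ≤ n → n ≤ k → T (p n) ≤ T (p m) := by
        intro n hn
        induction n, hn using Nat.le_induction with
        | base => intro _; exact le_rfl
        | succ n hn ih =>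
          intro hnk
          have := mt (h2 n (by omega)).1 (rr_const hrr hn (by omega))
          have := ih (by omega)
          omega
      exact this k hmk le_rfl
    · intro i i' j hc hc' hj
      obtain ⟨k, hk, e⟩ := h.mem.1 hc
      obtain ⟨m, hm, e'⟩ := h.mem.1 hc'
      have hmk : k ≤ m := by
        rw [← h.rb hk hm, e, e']; left; exact hj
      have hne : k ≠ m := by
        rintro rfl
        rw [e] at e'; simp at e'; omega
      have hrr : rr (fun k => ¬ S k) k = rr (fun k => ¬ S k) m := by
        have a := h.snd k hk
        have a' := h.snd m hm
        rw [e] at a; rw [e'] at a'; simp at a a'; omega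
      rw [← e, ← e']
      have : ∀ n, k + 1 ≤ n → n ≤ m → T (p k) < T (p n) := by
        intro n hn
        induction n, hn using Nat.le_induction with
        | base =>
          intro hh
          exact (h2 k (by omega)).2 (not_not.1 (rr_const hrr le_rfl (by omega)))
        | succ n hn ih =>
          intro hnk
          have := (h2 n (by omega)).2 (not_not.1 (rr_const hrr (by omega) (by omega)))
          have := ih (by omega)
          omega
      exact this m (by omega) le_rfl

def toW (p : ℕ → ℕ × ℕ) (N : ℕ) (T : ℕ × ℕ → ℕ) (k : ℕ) : ℕ := if k < N then T (p k) - 1 else 0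

lemma Pth.content (h : Pth A N S p I J) {T : ℕ × ℕ → ℕ} (hT : ∀ k < N, 1 ≤ T (p k)) (i : ℕ) :
    A.content T (i + 1) = cnt (toW p N T) N i := by
  unfold SkewShape.content cnt
  rw [h.card]
  congr 1; apply filter_congr; intro k hk
  simp only [mem_range] at hk
  have := hT k hk
  simp only [toW, if_pos hk]; omega

lemma Pth.pre (h : Pth A N S p I J) {T : ℕ × ℕ → ℕ} (hT : ∀ k < N, 1 ≤ T (p k)) {m} (hm : m < N) (i : ℕ) :
    (A.cells.filter fun c => T c = i + 1 ∧ ReadsBefore c (p m)).card = cnt (toW p N T) (m+1) i := by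
  unfold cnt
  rw [h.card]
  congr 1; ext k
  simp only [mem_filter, mem_range]
  constructor
  · rintro ⟨h1, h2, h3⟩
    rw [h.rb h1 hm] at h3
    refine ⟨by omega, ?_⟩
    simp only [toW, if_pos h1]; omega
  · rintro ⟨h1, h2⟩
    have h3 : k < N := by omega
    rw [h.rb h3 hm]
    have := hT k h3
    simp only [toW, if_pos h3] at h2
    omega

lemma Pth.lr (h : Pth A N S p I J) (T : ℕ × ℕ → ℕ) : A.IsLR T ↔
    (∀ k < N, 1 ≤ T (p k)) ∧ Wd N S (toW p N T) := by
  unfold SkewShape.IsLR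
  rw [h.ssyt]
  constructor
  · rintro ⟨⟨h1, h2⟩, h3⟩
    refine ⟨h1, ⟨?_, ?_, ?_⟩⟩
    · intro n hn a
      rcases n with _ | m
      · simp [cnt_zero]
      · have := h3 (p m) (h.pm hn) a
        rwa [h.pre h1 hn, h.pre (i := a) h1 hn] at this
    · intro k hk
      rw [← h2 k hk]
      have a := h1 k (by omega)
      have b := h1 (k+1) hk
      simp only [toW, if_pos hk, if_pos (show k < N by omega)]
      omega
    · intro k hk; simp [toW, hk]
  · rintro ⟨h1, h2⟩
    refine ⟨⟨h1, ?_⟩, ?_⟩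
    · intro k hk
      have := h2.des k hk
      rw [← this]
      have a := h1 k (by omega)
      have b := h1 (k+1) hk
      simp only [toW, if_pos hk, if_pos (show k < N by omega)]
      omega
    · intro d hd a
      obtain ⟨m, hm, rfl⟩ := h.mem.1 hd
      rw [h.pre h1 hm, h.pre (i := a) h1 hm]
      exact h2.lat (m+1) hm a

def toT (A : SkewShape) (I J : ℕ) (w : ℕ → ℕ) (c : ℕ × ℕ) : ℕ :=
  if c ∈ A.cells then w (c.1 - I + (J - c.2)) + 1 else 0

lemma Pth.toT_p (h : Pth A N S p I J) (w : ℕ → ℕ) {k} (hk : k < N) : toT A I J w (p k) = w k + 1 := by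
  unfold toT
  rw [if_pos (h.pm hk)]
  have a := h.fst k hk
  have b := h.snd k hk
  have := rr_add S k
  rw [show (p k).1 - I + (J - (p k).2) = k by omega]

lemma Pth.toW_toT (h : Pth A N S p I J) {w : ℕ → ℕ} (hw : ∀ k, N ≤ k → w k = 0) : toW p N (toT A I J w) = w := by
  funext k
  unfold toW
  split_ifs with hk
  · rw [h.toT_p w hk]; rfl
  · exact (hw k (by omega)).symm

lemma Pth.toT_lr (h : Pth A N S p I J) {w : ℕ → ℕ} (hw : Wd N S w) : A.IsLR (toT A I J w) ∧
    (∀ i, A.content (toT A I J w) (i+1) = cnt w N i) := by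
  have h1 : ∀ k < N, 1 ≤ toT A I J w (p k) := fun k hk => by rw [h.toT_p w hk]; omega
  constructor
  · rw [h.lr, h.toW_toT hw.sup]; exact ⟨h1, hw⟩
  · intro i; rw [h.content h1, h.toW_toT hw.sup]

lemma Pth.toW_inj (h : Pth A N S p I J) {T T' : ℕ × ℕ → ℕ} (hT : A.IsLR T) (hT' : A.IsLR T')
    (z : ∀ c, c ∉ A.cells → T c = 0) (z' : ∀ c, c ∉ A.cells → T' c = 0)
    (e : toW p N T = toW p N T') : T = T' := by
  funext c
  by_cases hc : c ∈ A.cells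
  · obtain ⟨k, hk, rfl⟩ := h.mem.1 hc
    have := congrFun e k
    simp only [toW, if_pos hk] at this
    have := ((h.lr T).1 hT).1 k hk
    have := ((h.lr T').1 hT').1 k hk
    omega
  · rw [z c hc, z' c hc]

lemma Pth.LR_fin (h : Pth A N S p I J) (lam) : (A.LRset lam).Finite := by
  refine Set.Finite.of_injOn (f := toW p N) (t := {w | (∀ k, w k ≤ N) ∧ ∀ k, N ≤ k → w k = 0}) ?_ ?_ (fin_words N)
  · intro T hT
    have := ((h.lr T).1 hT.1).2
    exact ⟨Wd_bd this, this.sup⟩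
  · intro T hT T' hT' e
    exact h.toW_inj hT.1 hT'.1 hT.2.1 hT'.2.1 e

lemma part_ex {f : ℕ → ℕ} (hf : ∀ a, f (a+1) ≤ f a) {N : ℕ} (h0 : ∀ a, N ≤ a → f a = 0) :
    ∃ lam : Multiset ℕ, 0 ∉ lam ∧ ∀ i, part lam i = f i := by
  have hex : ∃ M, f M = 0 := ⟨N, h0 N le_rfl⟩
  have anti : Antitone f := antitone_nat_of_succ_le hf
  refine ⟨↑((List.range (Nat.find hex)).map f), ?_, ?_⟩
  · simp only [Multiset.mem_coe, List.mem_map, List.mem_range, not_exists, not_and]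
    intro x hx; exact Nat.find_min hex hx
  · intro i
    unfold part
    have hs : (Multiset.sort (↑((List.range (Nat.find hex)).map f) : Multiset ℕ) (· ≥ ·)) = (List.range (Nat.find hex)).map f := by
      apply List.Perm.eq_of_pairwise' (r := (· ≥ ·))
      · exact Multiset.pairwise_sort _ _
      · rw [List.pairwise_map]
        exact List.pairwise_lt_range.imp (fun h => anti (le_of_lt h))
      · rw [← Multiset.coe_eq_coe, Multiset.sort_eq]
    rw [hs]
    rcases Nat.lt_or_ge i (Nat.find hex) with h | h
    · simp [List.getD, h]
    · have : f i = 0 := Nat.le_zero.1 ((anti h).trans (Nat.find_spec hex).le)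
      rw [List.getD_eq_default _ _ (by simpa using h), this]

lemma bridge {R : SkewShape} {S' p' I' J'} (h : Pth A N S p I J) (h' : Pth R N S' p' I' J')
    (hle : Le N S S') (hst : Str N S S') : R.SchurPosDiff A ∧ A.supp ⊂ R.supp := by
  obtain ⟨Φ, p1, p2⟩ := hle
  constructor
  · intro lam
    refine Set.ncard_le_ncard_of_injOn (fun T => toT R I' J' (Φ (toW p N T))) ?_ ?_ (h'.LR_fin lam)
    · rintro T ⟨t1, t2, t3⟩
      have a := (h.lr T).1 t1
      have b := p1 _ a.2
      have c := h'.toT_lr b.1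
      refine ⟨c.1, fun x hx => if_neg hx, fun i => ?_⟩
      rw [c.2, b.2, ← h.content a.1, t3]
    · rintro T ⟨t1, t2, t3⟩ T' ⟨t1', t2', t3'⟩ e
      have a := (h.lr T).1 t1
      have a' := (h.lr T').1 t1'
      have b := p1 _ a.2
      have b' := p1 _ a'.2
      have e2 := congrArg (toW p' N) e
      beta_reduce at e2
      rw [h'.toW_toT b.1.sup, h'.toW_toT b'.1.sup] at e2
      exact h.toW_inj t1 t1' t2 t2' (p2 _ _ a.2 a'.2 e2)
  · rw [Set.ssubset_iff_of_subset]
    · obtain ⟨v, hv, hv2⟩ := hst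
      obtain ⟨lam, l1, l2⟩ := part_ex (f := cnt v N) (fun a => hv.lat N le_rfl a)
        (fun a ha => lat_sup (fun n hn => hv.lat n hn) a ha)
      refine ⟨lam, ⟨l1, _, (h'.toT_lr hv).1, fun i => by rw [(h'.toT_lr hv).2, l2]⟩, ?_⟩
      rintro ⟨_, T, t1, t3⟩
      have a := (h.lr T).1 t1
      apply hv2 _ a.2
      funext i
      rw [← h.content a.1, t3, l2]
    · rintro lam ⟨l1, T, t1, t3⟩
      have a := (h.lr T).1 t1
      have b := p1 _ a.2
      have c := h'.toT_lr b.1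
      refine ⟨l1, _, c.1, fun i => ?_⟩
      rw [c.2, b.2, ← h.content a.1, t3]

end Rib

namespace Rib
open Finset

lemma cvx {A : SkewShape} {a b i j i' j' : ℕ} (h : (i, j) ∈ A.cells) (h' : (i', j') ∈ A.cells)
    (h1 : i ≤ a) (h2 : a ≤ i') (h3 : j ≤ b) (h4 : b ≤ j') : (a, b) ∈ A.cells := by
  simp only [SkewShape.cells, mem_sdiff, YoungDiagram.mem_cells] at *
  exact ⟨A.outer.up_left_mem h2 h4 h'.1, fun hc => h.2 (A.inner.up_left_mem h1 h3 hc)⟩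

lemma nodiag {A : SkewShape} (hA : A.Ribbon) {c d} (hc : c ∈ A.cells) (hd : d ∈ A.cells) (h : c.1 < d.1) :
    d.2 ≤ c.2 := by
  obtain ⟨i, j⟩ := c
  obtain ⟨i', j'⟩ := d
  by_contra hh
  simp at h hh
  exact hA.2 i j ⟨hc, cvx hc hd (by omega) (by omega) (by omega) (by omega),
    cvx hc hd (by omega) (by omega) (by omega) (by omega), cvx hc hd (by omega) (by omega) (by omega) (by omega)⟩

/-- next cell exists -/
lemma nxt {A : SkewShape} (hA : A.Ribbon) {c d} (hc : c ∈ A.cells) (hd : d ∈ A.cells)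
    (h : c.1 + d.2 < d.1 + c.2) : (c.1 + 1, c.2) ∈ A.cells ∨ ∃ j, j + 1 = c.2 ∧ (c.1, j) ∈ A.cells := by
  by_contra hno
  push Not at hno
  apply hA.1.2
  refine ⟨A.cells.filter (fun x => x.1 + c.2 ≤ c.1 + x.2), A.cells.filter (fun x => ¬ (x.1 + c.2 ≤ c.1 + x.2)),
    ⟨c, by simp [hc]⟩, ⟨d, by simp only [mem_filter]; exact ⟨hd, by omega⟩⟩, filter_union_filter_not_eq _ _, ?_, ?_⟩
  · rw [← disjoint_iff_inter_eq_empty]; exact disjoint_filter_filter_not _ _ _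
  · intro b hb e he
    simp only [mem_filter] at hb he
    obtain ⟨hb, hb2⟩ := hb
    obtain ⟨he, he2⟩ := he
    have n1 := fun h => nodiag hA hb hc h
    have n2 := fun h => nodiag hA hc hb h
    have n3 := fun h => nodiag hA hc he h
    have n4 := fun h => nodiag hA he hc h
    constructor
    · intro hr
      have r1 : e.1 = c.1 := by
        rcases Nat.lt_trichotomy e.1 c.1 with h | h | h
        · have := n4 h; have := n1 (by omega); omega
        · exact h
        · have := n3 h; have := n2 (by omega); omega
      have r2 : e.2 < c.2 := by omega
      apply hno.2 (c.2 - 1) (by omega)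
      have he' : (e.1, e.2) ∈ A.cells := he
      have hc' : (c.1, c.2) ∈ A.cells := hc
      exact cvx he' hc' (by omega) le_rfl (by omega) (by omega)
    · intro hr
      have r1 : e.2 = c.2 := by
        rcases Nat.lt_trichotomy e.1 c.1 with h | h | h
        · have := n4 h; omega
        · rcases Nat.lt_trichotomy b.1 c.1 with h' | h' | h'
          · have := n1 h'; omega
          · omega
          · have := n2 h'; omega
        · have := n3 h
          rcases Nat.lt_trichotomy b.1 c.1 with h' | h' | h'
          · have := n1 h'; omega
          · omega
          · have := n2 h'; omega
      have r2 : c.1 < e.1 := by omega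
      apply hno.1
      have he' : (e.1, e.2) ∈ A.cells := he
      have hc' : (c.1, c.2) ∈ A.cells := hc
      exact cvx hc' he' (by omega) (by omega) le_rfl (by omega)

lemma finj {A : SkewShape} (hA : A.Ribbon) {c d} (hc : c ∈ A.cells) (hd : d ∈ A.cells)
    (h : c.1 + d.2 = d.1 + c.2) : c = d := by
  rcases Nat.lt_trichotomy c.1 d.1 with h' | h' | h'
  · have := nodiag hA hc hd h'; omega
  · exact Prod.ext h' (by omega)
  · have := nodiag hA hd hc h'; omega

def mv (A : SkewShape) (c : ℕ × ℕ) : ℕ × ℕ := if (c.1 + 1, c.2) ∈ A.cells then (c.1 + 1, c.2) else (c.1, c.2 - 1)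

lemma ribbon_path {A : SkewShape} (hA : A.Ribbon) : ∃ S p I J, Pth A A.size S p I J := by
  classical
  obtain ⟨c0, hc0, hmin⟩ := exists_min_image A.cells (fun c => (c.1 : ℤ) - c.2) hA.1.1
  let p : ℕ → ℕ × ℕ := fun k => (mv A)^[k] c0
  have ps : ∀ k, p (k+1) = mv A (p k) := fun k => Function.iterate_succ_apply' _ _ _
  let S : ℕ → Prop := fun k => ((p k).1 + 1, (p k).2) ∈ A.cells
  have main : ∀ k, k < A.size → p k ∈ A.cells ∧ (p k).1 = c0.1 + rr S k ∧ (p k).2 + rr (fun k => ¬ S k) k = c0.2 := by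
    intro k
    induction k using Nat.strong_induction_on with
    | _ k ih =>
    intro hk
    rcases k with _ | k
    · exact ⟨hc0, by simp [rr_zero, p], by simp [rr_zero, p]⟩
    · obtain ⟨i1, i2, i3⟩ := ih k (by omega) (by omega)
      obtain ⟨d, hd, hd2⟩ : ∃ d ∈ A.cells, d ∉ (range (k+1)).image p := by
        by_contra hno
        push Not at hno
        have a := card_le_card (show A.cells ⊆ (range (k+1)).image p from hno)
        have b := card_image_le (s := range (k+1)) (f := p)
        rw [card_range] at b
        unfold SkewShape.size at hk
        omega
      have hlt : (p k).1 + d.2 < d.1 + (p k).2 := by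
        by_contra hge
        apply hd2
        have m := hmin d hd
        have ra := rr_add S k
        obtain ⟨t, ht⟩ : ∃ t : ℕ, d.1 + c0.2 = c0.1 + d.2 + t := ⟨d.1 + c0.2 - (c0.1 + d.2), by omega⟩
        have htk : t ≤ k := by omega
        obtain ⟨j1, j2, j3⟩ := ih t (by omega) (by omega)
        have rb := rr_add S t
        exact mem_image.2 ⟨t, by simp; omega, finj hA j1 hd (by omega)⟩
      rw [rr_succ, rr_succ]
      by_cases hS : S k
      · have e : p (k+1) = ((p k).1 + 1, (p k).2) := by rw [ps]; exact if_pos hS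
        rw [if_pos hS, if_neg (not_not.2 hS), e]
        exact ⟨hS, by simp; omega, by simp; omega⟩
      · have e : p (k+1) = ((p k).1, (p k).2 - 1) := by rw [ps]; exact if_neg hS
        rw [if_neg hS, if_pos hS, e]
        rcases nxt hA i1 hd hlt with h | ⟨j, h1, h2⟩
        · exact (hS h).elim
        · rw [show (p k).2 - 1 = j by omega]
          exact ⟨h2, by simp; omega, by simp; omega⟩
  refine ⟨S, p, c0.1, c0.2, ⟨?_, fun k hk => (main k hk).2.1, fun k hk => (main k hk).2.2⟩⟩
  symm
  apply eq_of_subset_of_card_le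
  · intro c hc
    obtain ⟨k, hk, rfl⟩ := mem_image.1 hc
    exact (main k (by simpa using hk)).1
  · rw [card_image_of_injOn]
    · simp [SkewShape.size]
    · intro k hk m hm e
      simp only [coe_range, Set.mem_Iio] at hk hm
      obtain ⟨_, a, b⟩ := main k hk
      obtain ⟨_, a', b'⟩ := main m hm
      have := rr_add S k
      have := rr_add S m
      rw [e] at a b
      omega

lemma path_ribbon (S : ℕ → Prop) {N : ℕ} (hN : 1 ≤ N) : ∃ R p I J, Pth R N S p I J ∧ R.Ribbon := by
  classical
  let q : ℕ → ℕ := rr (fun k => ¬ S k)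
  let J := q (N-1)
  let p : ℕ → ℕ × ℕ := fun k => (rr S k, J - q k)
  have qm : ∀ k m, k ≤ m → q k ≤ q m := fun k m h => rr_mono _ h
  have rm : ∀ k m, k ≤ m → rr S k ≤ rr S m := fun k m h => rr_mono _ h
  have ra : ∀ k, rr S k + q k = k := rr_add S
  have qJ : ∀ k < N, q k ≤ J := fun k hk => qm _ _ (by omega)
  have anti : ∀ k m, k < N → m < N → rr S k < rr S m → J - q m ≤ J - q k := by
    intro k m hk hm h
    rcases Nat.le_total k m with h' | h'
    · have := qm _ _ h'; omega
    · have := rm _ _ h'; omega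
  let out : YoungDiagram := ⟨(range N).biUnion (fun k => range (rr S k + 1) ×ˢ range (J - q k + 1)), by
    rintro ⟨a, b⟩ ⟨a', b'⟩ ⟨h1, h2⟩ h
    simp only [coe_biUnion, coe_product, Set.mem_iUnion, Set.mem_prod, mem_coe, mem_range] at h ⊢
    obtain ⟨k, hk, h3, h4⟩ := h
    simp at h1 h2
    exact ⟨k, hk, by omega, by omega⟩⟩
  let inn : YoungDiagram := ⟨(range N).biUnion (fun k => range (rr S k) ×ˢ range (J - q k)), by
    rintro ⟨a, b⟩ ⟨a', b'⟩ ⟨h1, h2⟩ h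
    simp only [coe_biUnion, coe_product, Set.mem_iUnion, Set.mem_prod, mem_coe, mem_range] at h ⊢
    obtain ⟨k, hk, h3, h4⟩ := h
    simp at h1 h2
    exact ⟨k, hk, by omega, by omega⟩⟩
  have mo : ∀ a b, (a, b) ∈ out.cells ↔ ∃ k < N, a ≤ rr S k ∧ b ≤ J - q k := by
    intro a b
    simp [out, Nat.lt_succ_iff]
  have mi : ∀ a b, (a, b) ∈ inn.cells ↔ ∃ k < N, a < rr S k ∧ b < J - q k := by
    intro a b
    simp [inn]
  let R : SkewShape := ⟨out, inn, by
    rintro ⟨a, b⟩ h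
    obtain ⟨k, hk, h1, h2⟩ := (mi a b).1 h
    exact (mo a b).2 ⟨k, hk, by omega, by omega⟩⟩
  have hP : Pth R N S p 0 J := by
    refine ⟨?_, fun k hk => by simp [p], fun k hk => ?_⟩
    · ext ⟨a, b⟩
      show (a, b) ∈ out.cells \ inn.cells ↔ _
      rw [mem_sdiff, mo, mi]
      simp only [mem_image, mem_range, p, Prod.mk.injEq]
      constructor
      · rintro ⟨⟨k, hk, h1, h2⟩, h3⟩
        push Not at h3
        have e1 := rm k (N-1) (by omega)
        have e2 := ra (N-1)
        have hm : a + J - b < N := by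
          have : q (N-1) = J := rfl
          omega
        have e3 := ra (a + J - b)
        have e4 := qJ _ hm
        have e5 := h3 _ hm
        have e6 := anti _ _ hm hk
        have e7 := qJ k hk
        refine ⟨a + J - b, hm, ?_⟩
        omega
      · rintro ⟨k, hk, rfl, rfl⟩
        refine ⟨⟨k, hk, le_rfl, le_rfl⟩, ?_⟩
        rintro ⟨m, hm, h1, h2⟩
        have := anti _ _ hk hm h1
        omega
    · have : q k ≤ J := qJ k hk
      show J - q k + q k = J
      omega
  refine ⟨R, p, 0, J, hP, ⟨⟨⟨p 0, hP.pm (by omega)⟩, ?_⟩, ?_⟩⟩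
  · rintro ⟨B, C, ⟨b, hb⟩, ⟨c, hc⟩, h1, h2, h3⟩
    have hor : ∀ k < N, p k ∈ B ∨ p k ∈ C := by
      intro k hk
      have := hP.pm hk
      rwa [← h1, mem_union] at this
    have key : ∀ k < N, (p k ∈ B ↔ p 0 ∈ B) := by
      intro k
      induction k with
      | zero => intro _; rfl
      | succ k ih =>
        intro hk
        rw [← ih (by omega)]
        have adj : (p k).1 = (p (k+1)).1 ∨ (p k).2 = (p (k+1)).2 := by
          have e1 := rr_succ S k
          have e2 := rr_succ (fun k => ¬ S k) k
          by_cases hS : S k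
          · right
            rw [if_neg (not_not.2 hS)] at e2
            have : q (k+1) = q k := e2
            simp only [p, this]
          · left
            rw [if_neg hS] at e1
            simp only [p]; omega
        constructor
        · intro hB
          rcases hor k (by omega) with h | h
          · exact h
          · have := h3 _ hB _ h
            rcases adj with e | e
            · exact (this.1 e.symm).elim
            · exact (this.2 e.symm).elim
        · intro hB
          rcases hor (k+1) hk with h | h
          · exact h
          · have := h3 _ hB _ h
            rcases adj with e | e
            · exact (this.1 e).elim
            · exact (this.2 e).elim
    obtain ⟨k, hk, rfl⟩ := hP.mem.1 (show b ∈ R.cells by rw [← h1]; exact mem_union_left _ hb)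
    obtain ⟨m, hm, rfl⟩ := hP.mem.1 (show c ∈ R.cells by rw [← h1]; exact mem_union_right _ hc)
    have : p m ∈ B := (key m hm).2 ((key k hk).1 hb)
    have : p m ∈ B ∩ C := mem_inter.2 ⟨this, hc⟩
    rw [h2] at this
    simp at this
  · rintro i j ⟨h1, -, -, h2⟩
    obtain ⟨k, hk, e⟩ := hP.mem.1 h1
    obtain ⟨m, hm, e'⟩ := hP.mem.1 h2
    simp only [p, Prod.mk.injEq] at e e'
    have := anti k m hk hm (by omega)
    omega

end Rib

theorem exists_equitable_ribbon_above (A : SkewShape)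
    (hA : A.Ribbon) (h : ¬ A.Equitable) :
    ∃ R : SkewShape, R.Ribbon ∧ R.Equitable ∧ R.size = A.size ∧
      R.SchurPosDiff A ∧ A.supp ⊂ R.supp := by
  obtain ⟨S, p, I, J, hP⟩ := Rib.ribbon_path hA
  have hN : 1 ≤ A.size := Finset.card_pos.2 hA.1.1
  obtain ⟨S', h1, h2, h3, h4⟩ := Rib.words_final hN _ S rfl
  obtain ⟨R, p', I', J', hR, hR2⟩ := Rib.path_ribbon S' hN
  refine ⟨R, hR2, ⟨hR.rowE.2 h2, hR.colE.2 h3⟩, hR.size, ?_⟩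
  refine Rib.bridge hP hR h1 (h4 ?_)
  rintro ⟨a, b⟩
  exact h ⟨hP.rowE.2 a, hP.colE.2 b⟩
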